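/- arXiv:2207.06129 — 2 statements merged into one kernel-verified Lean document; each statement's English description precedes it below -/
import Mathlib

section
/- Let 0 < α < n, 1/q = 1 − α/n, and w ∈ A_{1,q}. Suppose ψ₁ and ψ₂ are positive functions on ℝⁿ × (0,∞) for which there is a constant C > 0, independent of a and r, with ∫_r^∞ (w(B(a,t)) / w^q(B(a,t))^{1/q})·ψ₁(a,t) dt/t ≤ C·ψ₂(a,r) for every (a,r) ∈ ℝⁿ × (0,∞). Then I_α is bounded from M^{1,w}_{ψ₁} to WM^{q,w^q}_{ψ₂}: there is C' > 0 such that ‖I_α f‖_{WM^{q,w^q}_{ψ₂}} ≤ C'·‖f‖_{M^{1,w}_{ψ₁}} for every f ∈ M^{1,w}_{ψ₁}. -/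
open MeasureTheory Metric Set
open scoped ENNReal

noncomputable section

/-- The weighted measure of a set: `w(E) = ∫_E w(x) dx`, valued in `ℝ≥0∞`. -/
def wSet {n : ℕ} (w : EuclideanSpace ℝ (Fin n) → ℝ)
    (E : Set (EuclideanSpace ℝ (Fin n))) : ℝ≥0∞ :=
  ∫⁻ x in E, ENNReal.ofReal (w x)

/-- The weighted Lebesgue norm `‖f‖_{L^{p,w}(Ω)} = (∫_Ω |f(x)|^p w(x) dx)^{1/p}`. -/
def wLp {n : ℕ} (p : ℝ) (w f : EuclideanSpace ℝ (Fin n) → ℝ)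
    (Ω : Set (EuclideanSpace ℝ (Fin n))) : ℝ≥0∞ :=
  (∫⁻ x in Ω, ENNReal.ofReal |f x| ^ p * ENNReal.ofReal (w x)) ^ (1 / p)

/-- The weighted Lebesgue norm for an `ℝ≥0∞`-valued function. -/
def wLpE {n : ℕ} (p : ℝ) (w : EuclideanSpace ℝ (Fin n) → ℝ)
    (g : EuclideanSpace ℝ (Fin n) → ℝ≥0∞) (Ω : Set (EuclideanSpace ℝ (Fin n))) : ℝ≥0∞ :=
  (∫⁻ x in Ω, g x ^ p * ENNReal.ofReal (w x)) ^ (1 / p)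

/-- The weak weighted Lebesgue norm `‖f‖_{WL^{p,w}(Ω)} = sup_{γ>0} γ·w({x ∈ Ω : |f(x)| > γ})^{1/p}`. -/
def wWeakLp {n : ℕ} (p : ℝ) (w f : EuclideanSpace ℝ (Fin n) → ℝ)
    (Ω : Set (EuclideanSpace ℝ (Fin n))) : ℝ≥0∞ :=
  ⨆ γ : Set.Ioi (0 : ℝ),
    ENNReal.ofReal γ.1 * (wSet w {x | x ∈ Ω ∧ γ.1 < |f x|}) ^ (1 / p)

/-- The weak weighted Lebesgue norm for an `ℝ≥0∞`-valued function. -/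
def wWeakLpE {n : ℕ} (p : ℝ) (w : EuclideanSpace ℝ (Fin n) → ℝ)
    (g : EuclideanSpace ℝ (Fin n) → ℝ≥0∞) (Ω : Set (EuclideanSpace ℝ (Fin n))) : ℝ≥0∞ :=
  ⨆ γ : Set.Ioi (0 : ℝ),
    ENNReal.ofReal γ.1 * (wSet w {x | x ∈ Ω ∧ ENNReal.ofReal γ.1 < g x}) ^ (1 / p)

/-- `f ∈ L^{p,w}_loc`: `f` is measurable and `‖f‖_{L^{p,w}(B)} < ∞` on every ball. -/
def MemLocWLp {n : ℕ} (p : ℝ) (w f : EuclideanSpace ℝ (Fin n) → ℝ) : Prop :=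
  Measurable f ∧ ∀ (a : EuclideanSpace ℝ (Fin n)) (r : ℝ), 0 < r → wLp p w f (ball a r) < ⊤

/-- A weight: nonnegative, measurable, locally integrable, positive a.e. -/
def IsWeight {n : ℕ} (w : EuclideanSpace ℝ (Fin n) → ℝ) : Prop :=
  Measurable w ∧ (∀ x, 0 ≤ w x) ∧ LocallyIntegrable w volume ∧ ∀ᵐ x ∂volume, 0 < w x

/-- The Muckenhoupt class `A_p` for `1 < p`. -/
def MuckAp {n : ℕ} (p : ℝ) (w : EuclideanSpace ℝ (Fin n) → ℝ) : Prop :=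
  ∃ C : ℝ, 0 < C ∧ ∀ (a : EuclideanSpace ℝ (Fin n)) (r : ℝ), 0 < r →
    ((volume (ball a r))⁻¹ * ∫⁻ x in ball a r, ENNReal.ofReal (w x)) *
      ((volume (ball a r))⁻¹ *
        ∫⁻ x in ball a r, ENNReal.ofReal (w x ^ (-(1 / (p - 1))))) ^ (p - 1) ≤
      ENNReal.ofReal C

/-- The Muckenhoupt class `A_1`. -/
def MuckA1 {n : ℕ} (w : EuclideanSpace ℝ (Fin n) → ℝ) : Prop :=
  ∃ C : ℝ, 0 < C ∧ ∀ (a : EuclideanSpace ℝ (Fin n)) (r : ℝ), 0 < r →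
    ((volume (ball a r))⁻¹ * ∫⁻ x in ball a r, ENNReal.ofReal (w x)) *
      essSup (fun x => ENNReal.ofReal (w x)⁻¹) (volume.restrict (ball a r)) ≤
      ENNReal.ofReal C

/-- The class `A_{p,q}` for `1 < p`, where `p'` is the conjugate exponent of `p`. -/
def MuckApq {n : ℕ} (p q p' : ℝ) (w : EuclideanSpace ℝ (Fin n) → ℝ) : Prop :=
  ∃ C : ℝ, 0 < C ∧ ∀ (a : EuclideanSpace ℝ (Fin n)) (r : ℝ), 0 < r →
    ((volume (ball a r))⁻¹ * ∫⁻ x in ball a r, ENNReal.ofReal (w x ^ q)) ^ (1 / q) *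
      ((volume (ball a r))⁻¹ * ∫⁻ x in ball a r, ENNReal.ofReal (w x ^ (-p'))) ^ (1 / p') ≤
      ENNReal.ofReal C

/-- The class `A_{1,q}`. -/
def MuckA1q {n : ℕ} (q : ℝ) (w : EuclideanSpace ℝ (Fin n) → ℝ) : Prop :=
  ∃ C : ℝ, 0 < C ∧ ∀ (a : EuclideanSpace ℝ (Fin n)) (r : ℝ), 0 < r →
    ((volume (ball a r))⁻¹ * ∫⁻ x in ball a r, ENNReal.ofReal (w x ^ q)) ^ (1 / q) *
      essSup (fun x => ENNReal.ofReal (w x)⁻¹) (volume.restrict (ball a r)) ≤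
      ENNReal.ofReal C

/-- The Hardy–Littlewood maximal operator. -/
def HLMax {n : ℕ} (f : EuclideanSpace ℝ (Fin n) → ℝ)
    (x : EuclideanSpace ℝ (Fin n)) : ℝ≥0∞ :=
  ⨆ r : Set.Ioi (0 : ℝ), (volume (ball x r.1))⁻¹ * ∫⁻ y in ball x r.1, ENNReal.ofReal |f y|

/-- The fractional integral operator `I_α` (applied to `|f|`, valued in `ℝ≥0∞`). -/
def fracIntE {n : ℕ} (α : ℝ) (f : EuclideanSpace ℝ (Fin n) → ℝ)
    (x : EuclideanSpace ℝ (Fin n)) : ℝ≥0∞ :=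
  ∫⁻ y, ENNReal.ofReal |f y| / ENNReal.ofReal (dist x y ^ ((n : ℝ) - α))

/-- The fractional maximal operator `M_α`. -/
def fracMax {n : ℕ} (α : ℝ) (f : EuclideanSpace ℝ (Fin n) → ℝ)
    (x : EuclideanSpace ℝ (Fin n)) : ℝ≥0∞ :=
  ⨆ r : Set.Ioi (0 : ℝ),
    (volume (ball x r.1)) ^ (α / (n : ℝ) - 1) * ∫⁻ y in ball x r.1, ENNReal.ofReal |f y|

/-- The generalized weighted Morrey norm `‖f‖_{M^{p,w}_ψ}`. -/
def morreyNorm {n : ℕ} (p : ℝ) (w : EuclideanSpace ℝ (Fin n) → ℝ)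
    (ψ : EuclideanSpace ℝ (Fin n) → ℝ → ℝ) (f : EuclideanSpace ℝ (Fin n) → ℝ) : ℝ≥0∞ :=
  ⨆ (a : EuclideanSpace ℝ (Fin n)) (r : Set.Ioi (0 : ℝ)),
    (ENNReal.ofReal (ψ a r.1))⁻¹ * wSet w (ball a r.1) ^ (-(1 / p)) * wLp p w f (ball a r.1)

/-- The generalized weighted Morrey norm for an `ℝ≥0∞`-valued function. -/
def morreyNormE {n : ℕ} (p : ℝ) (w : EuclideanSpace ℝ (Fin n) → ℝ)
    (ψ : EuclideanSpace ℝ (Fin n) → ℝ → ℝ) (g : EuclideanSpace ℝ (Fin n) → ℝ≥0∞) : ℝ≥0∞ :=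
  ⨆ (a : EuclideanSpace ℝ (Fin n)) (r : Set.Ioi (0 : ℝ)),
    (ENNReal.ofReal (ψ a r.1))⁻¹ * wSet w (ball a r.1) ^ (-(1 / p)) * wLpE p w g (ball a r.1)

/-- The generalized weighted weak Morrey norm `‖f‖_{WM^{p,w}_ψ}`. -/
def morreyWeakNorm {n : ℕ} (p : ℝ) (w : EuclideanSpace ℝ (Fin n) → ℝ)
    (ψ : EuclideanSpace ℝ (Fin n) → ℝ → ℝ) (f : EuclideanSpace ℝ (Fin n) → ℝ) : ℝ≥0∞ :=
  ⨆ (a : EuclideanSpace ℝ (Fin n)) (r : Set.Ioi (0 : ℝ)),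
    (ENNReal.ofReal (ψ a r.1))⁻¹ * wSet w (ball a r.1) ^ (-(1 / p)) * wWeakLp p w f (ball a r.1)

/-- The generalized weighted weak Morrey norm for an `ℝ≥0∞`-valued function. -/
def morreyWeakNormE {n : ℕ} (p : ℝ) (w : EuclideanSpace ℝ (Fin n) → ℝ)
    (ψ : EuclideanSpace ℝ (Fin n) → ℝ → ℝ) (g : EuclideanSpace ℝ (Fin n) → ℝ≥0∞) : ℝ≥0∞ :=
  ⨆ (a : EuclideanSpace ℝ (Fin n)) (r : Set.Ioi (0 : ℝ)),
    (ENNReal.ofReal (ψ a r.1))⁻¹ * wSet w (ball a r.1) ^ (-(1 / p)) * wWeakLpE p w g (ball a r.1)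

end

theorem ker_lint {β d : ℝ} (hβ : 0 < β) (hd : 0 < d) :
    ∫⁻ t in Ioi d, ENNReal.ofReal (t ^ (-β - 1)) = ENNReal.ofReal (d ^ (-β) / β) := by
  have h1 : -β - 1 < -1 := by linarith
  rw [← ofReal_integral_eq_lintegral_ofReal (integrableOn_Ioi_rpow_of_lt h1 hd),
    integral_Ioi_rpow_of_lt h1 hd]
  · congr 1
    rw [show -β - 1 + 1 = -β by ring, neg_div_neg_eq]
  · filter_upwards [ae_restrict_mem measurableSet_Ioi] with t ht
    exact Real.rpow_nonneg (hd.trans ht).le _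

theorem ker_lint0 {α d : ℝ} (hα : 0 < α) (hd : 0 < d) :
    ∫⁻ t in Ioc 0 d, ENNReal.ofReal (t ^ (α - 1)) = ENNReal.ofReal (d ^ α / α) := by
  have h1 : -1 < α - 1 := by linarith
  have hi := intervalIntegral.intervalIntegrable_rpow' (a := 0) (b := d) h1
  rw [intervalIntegrable_iff_integrableOn_Ioc_of_le hd.le] at hi
  rw [← ofReal_integral_eq_lintegral_ofReal hi]
  · rw [← intervalIntegral.integral_of_le hd.le, integral_rpow (Or.inl h1)]
    congr 1
    rw [show α - 1 + 1 = α by ring, Real.zero_rpow hα.ne', sub_zero]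
  · filter_upwards [ae_restrict_mem measurableSet_Ioc] with t ht
    exact Real.rpow_nonneg ht.1.le _

theorem ker_inv {β d : ℝ} (hβ : 0 < β) (hd : 0 < d) :
    (ENNReal.ofReal (d ^ β))⁻¹ =
      ENNReal.ofReal β * ∫⁻ t in Ioi d, ENNReal.ofReal (t ^ (-β - 1)) := by
  rw [ker_lint hβ hd, ← ENNReal.ofReal_mul hβ.le, ← ENNReal.ofReal_inv_of_pos (by positivity)]
  congr 1
  rw [Real.rpow_neg hd.le]; field_simp

theorem fubini_ker {n : ℕ} {β : ℝ} (hβ : 0 < β) (μ : Measure (EuclideanSpace ℝ (Fin n)))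
    [SFinite μ] (y : EuclideanSpace ℝ (Fin n)) (hy : ∀ᵐ x ∂μ, x ≠ y) :
    ∫⁻ x, (ENNReal.ofReal (dist x y ^ β))⁻¹ ∂μ =
      ENNReal.ofReal β * ∫⁻ t in Ioi (0:ℝ), ENNReal.ofReal (t ^ (-β - 1)) * μ (ball y t) := by
  have hms : MeasurableSet {p : EuclideanSpace ℝ (Fin n) × ℝ | dist p.1 y < p.2} :=
    (isOpen_lt (by fun_prop) (by fun_prop)).measurableSet
  have hmeas : Measurable (Function.uncurry (fun (x : EuclideanSpace ℝ (Fin n)) (t : ℝ) =>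
      {p : EuclideanSpace ℝ (Fin n) × ℝ | dist p.1 y < p.2}.indicator
        (fun p => ENNReal.ofReal (p.2 ^ (-β - 1))) (x, t))) := by
    apply Measurable.indicator _ hms
    fun_prop
  calc _ = ∫⁻ x, (ENNReal.ofReal β * ∫⁻ t in Ioi (0:ℝ),
        {p : EuclideanSpace ℝ (Fin n) × ℝ | dist p.1 y < p.2}.indicator
        (fun p => ENNReal.ofReal (p.2 ^ (-β - 1))) (x, t)) ∂μ := by
        apply lintegral_congr_ae
        filter_upwards [hy] with x hx
        have hd : 0 < dist x y := dist_pos.2 hx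
        rw [ker_inv hβ hd]
        congr 1
        rw [← lintegral_indicator measurableSet_Ioi, ← lintegral_indicator measurableSet_Ioi]
        congr 1
        ext t
        simp only [indicator, mem_Ioi, mem_ofPred_eq]
        by_cases h : dist x y < t
        · simp [h, hd.trans h]
        · simp [h]
    _ = ENNReal.ofReal β * ∫⁻ x, (∫⁻ t in Ioi (0:ℝ),
        {p : EuclideanSpace ℝ (Fin n) × ℝ | dist p.1 y < p.2}.indicator
        (fun p => ENNReal.ofReal (p.2 ^ (-β - 1))) (x, t)) ∂μ := by
        rw [lintegral_const_mul' _ _ ENNReal.ofReal_ne_top]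
    _ = _ := by
        rw [lintegral_lintegral_swap hmeas.aemeasurable]
        congr 1
        apply lintegral_congr
        intro t
        rw [← lintegral_indicator_const measurableSet_ball]
        rfl

theorem ker_weak {n : ℕ} {α D ω e q : ℝ} (hα : 0 < α) (hαn : α < n) (hD : 0 < D) (hω : 0 < ω)
    (he : 0 < e) (hq : 1 / q = 1 - α / n)
    (ν : Measure (EuclideanSpace ℝ (Fin n))) [SFinite ν]
    (y : EuclideanSpace ℝ (Fin n)) (hy : ∀ᵐ x ∂ν, x ≠ y)
    (hν : ∀ t, 0 < t → ν (ball y t) ≤ ENNReal.ofReal (D * t ^ (n:ℝ) * ω ^ q))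
    (E : Set (EuclideanSpace ℝ (Fin n))) (hE : ν E = ENNReal.ofReal e) :
    ∫⁻ x in E, (ENNReal.ofReal (dist x y ^ ((n:ℝ) - α)))⁻¹ ∂ν ≤
      ENNReal.ofReal ((((n:ℝ) - α) * D / α + 1) * e ^ (α / n) * ω) := by
  have hn : (0:ℝ) < n := hα.trans hαn
  have hβ : 0 < (n:ℝ) - α := by linarith
  have hq0 : q = n / (n - α) := by
    have : q = 1 / (1 / q) := by simp
    rw [this, hq]; field_simp
  rw [fubini_ker hβ (ν.restrict E) y (ae_restrict_of_ae hy)]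
  set ρ : ℝ := (e / ω ^ q) ^ (1 / (n:ℝ)) with hρ
  have hωq : 0 < ω ^ q := by positivity
  have hρ0 : 0 < ρ := by positivity
  have e1 : ρ ^ α * ω ^ q = e ^ (α / n) * ω := by
    rw [hρ, ← Real.rpow_mul (by positivity), Real.div_rpow he.le hωq.le, ← Real.rpow_mul hω.le]
    rw [show 1 / (n:ℝ) * α = α / n by ring, div_mul_eq_mul_div, mul_div_assoc,
      ← Real.rpow_sub hω]
    congr 1
    rw [hq0, show (n:ℝ) / (n - α) - n / (n - α) * (α / n) = 1 by field_simp, Real.rpow_one]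
  have e2 : e * ρ ^ (-((n:ℝ) - α)) = e ^ (α / n) * ω := by
    rw [hρ, ← Real.rpow_mul (by positivity), Real.div_rpow he.le hωq.le, ← Real.rpow_mul hω.le,
      mul_div_assoc', div_eq_mul_inv, ← Real.rpow_neg hω.le]
    nth_rw 1 [← Real.rpow_one e]
    rw [← Real.rpow_add he]
    congr 2
    · field_simp; ring
    · rw [hq0, show -(↑n / (↑n - α) * (1 / ↑n * -(↑n - α))) = 1 by field_simp, Real.rpow_one]
  have hsplit : Ioi (0:ℝ) = Ioc 0 ρ ∪ Ioi ρ := (Ioc_union_Ioi_eq_Ioi hρ0.le).symm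
  have b1 : ∫⁻ t in Ioc (0:ℝ) ρ, ENNReal.ofReal (t ^ (-((n:ℝ) - α) - 1)) * ν.restrict E (ball y t)
      ≤ ENNReal.ofReal (D * ω ^ q * (ρ ^ α / α)) := by
    rw [ENNReal.ofReal_mul (by positivity), ← ker_lint0 hα hρ0,
      ← lintegral_const_mul' _ _ ENNReal.ofReal_ne_top]
    apply setLIntegral_mono' measurableSet_Ioc
    intro t ht
    calc _ ≤ ENNReal.ofReal (t ^ (-((n:ℝ) - α) - 1)) * ENNReal.ofReal (D * t ^ (n:ℝ) * ω ^ q) := by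
          gcongr
          exact (Measure.restrict_apply_le _ _).trans (hν t ht.1)
      _ = _ := by
          rw [← ENNReal.ofReal_mul (Real.rpow_nonneg ht.1.le _), ← ENNReal.ofReal_mul (by positivity)]
          congr 1
          have : t ^ (α - 1) = t ^ (-((n:ℝ) - α) - 1) * t ^ (n:ℝ) := by
            rw [← Real.rpow_add ht.1]; congr 1; ring
          rw [this]; ring
  have b2 : ∫⁻ t in Ioi ρ, ENNReal.ofReal (t ^ (-((n:ℝ) - α) - 1)) * ν.restrict E (ball y t)
      ≤ ENNReal.ofReal (e * (ρ ^ (-((n:ℝ) - α)) / ((n:ℝ) - α))) := by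
    rw [ENNReal.ofReal_mul (by positivity), ← ker_lint hβ hρ0,
      ← lintegral_const_mul' _ _ ENNReal.ofReal_ne_top]
    apply setLIntegral_mono' measurableSet_Ioi
    intro t ht
    rw [mul_comm]
    gcongr
    rw [← hE]
    exact (measure_mono (subset_univ _)).trans_eq (Measure.restrict_apply_univ E)
  calc _ ≤ ENNReal.ofReal ((n:ℝ) - α) * (ENNReal.ofReal (D * ω ^ q * (ρ ^ α / α)) +
        ENNReal.ofReal (e * (ρ ^ (-((n:ℝ) - α)) / ((n:ℝ) - α)))) := by
        gcongr
        rw [hsplit]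
        exact (lintegral_union_le _ _ _).trans (add_le_add b1 b2)
    _ = _ := by
        rw [← ENNReal.ofReal_add (by positivity) (by positivity), ← ENNReal.ofReal_mul hβ.le]
        congr 1
        have : ((n:ℝ) - α) * (D * ω ^ q * (ρ ^ α / α) + e * (ρ ^ (-((n:ℝ) - α)) / ((n:ℝ) - α)))
          = ((n:ℝ) - α) * D / α * (ρ ^ α * ω ^ q) + e * ρ ^ (-((n:ℝ) - α)) := by
          field_simp
        rw [this, e1, e2]; ring

theorem vol_rpow {n : ℕ} {α q : ℝ} (hα : 0 < α) (hαn : α < n) (hq : 1 / q = 1 - α / n) :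
    ∃ V : ℝ, 0 < V ∧ ∀ (a : EuclideanSpace ℝ (Fin n)) (t : ℝ), 0 < t →
      volume (ball a t) ^ (1 / q) = ENNReal.ofReal (V * t ^ ((n:ℝ) - α)) := by
  have hn : (0:ℝ) < n := hα.trans hαn
  have hv0 : volume (ball (0 : EuclideanSpace ℝ (Fin n)) 1) ≠ 0 :=
    (measure_ball_pos _ _ one_pos).ne'
  have hvt : volume (ball (0 : EuclideanSpace ℝ (Fin n)) 1) ≠ ⊤ := measure_ball_lt_top.ne
  have hvp := ENNReal.toReal_pos hv0 hvt
  have hq1 : 0 ≤ 1 / q := by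
    rw [hq, sub_nonneg, div_le_one hn]; exact hαn.le
  refine ⟨(volume (ball (0 : EuclideanSpace ℝ (Fin n)) 1)).toReal ^ (1 / q), by positivity, ?_⟩
  intro a t ht
  rw [Measure.addHaar_ball_of_pos _ _ ht, ← ENNReal.ofReal_toReal hvt,
    ← ENNReal.ofReal_mul (by positivity), ENNReal.ofReal_rpow_of_nonneg (by positivity) hq1]
  congr 1
  rw [finrank_euclideanSpace_fin, Real.mul_rpow (by positivity) (by positivity), mul_comm,
    ENNReal.toReal_ofReal hvp.le, ← Real.rpow_natCast, ← Real.rpow_mul ht.le]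
  congr 2
  rw [hq]; field_simp

theorem key_bound {n : ℕ} {α q : ℝ} (hα : 0 < α) (hαn : α < n) (hq : 1 / q = 1 - α / n)
    (w : EuclideanSpace ℝ (Fin n) → ℝ) (hw : IsWeight w) (hA1q : MuckA1q q w) :
    ∃ D : ℝ, 0 < D ∧ ∀ (a : EuclideanSpace ℝ (Fin n)) (t : ℝ), 0 < t →
      ∀ᵐ y, y ∈ ball a t → wSet (fun x => w x ^ q) (ball a t) ^ (1 / q) ≤
        ENNReal.ofReal (D * t ^ ((n:ℝ) - α) * w y) := by
  have hn : (0:ℝ) < n := hα.trans hαn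
  have hq1 : 0 ≤ 1 / q := by
    rw [hq, sub_nonneg, div_le_one hn]; exact hαn.le
  obtain ⟨V, hV, hvol⟩ := vol_rpow hα hαn hq
  obtain ⟨C, hC, hA⟩ := hA1q
  obtain ⟨-, -, -, hpos⟩ := hw
  refine ⟨V * C, by positivity, ?_⟩
  intro a t ht
  have h1 := (ae_restrict_iff' measurableSet_ball).1
    (ENNReal.ae_le_essSup (μ := volume.restrict (ball a t)) (fun x => ENNReal.ofReal (w x)⁻¹))
  filter_upwards [h1, hpos] with y hy hwy hyB
  have h2 := hA a t ht
  set W := ∫⁻ x in ball a t, ENNReal.ofReal (w x ^ q) with hW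
  have h3 : ((volume (ball a t))⁻¹ * W) ^ (1 / q) * ENNReal.ofReal (w y)⁻¹ ≤ ENNReal.ofReal C :=
    le_trans (by gcongr; exact hy hyB) h2
  rw [ENNReal.ofReal_inv_of_pos hwy, ← div_eq_mul_inv,
    ENNReal.div_le_iff (by simpa using hwy) ENNReal.ofReal_ne_top] at h3
  have h4 : wSet (fun x => w x ^ q) (ball a t) ^ (1 / q) =
      volume (ball a t) ^ (1 / q) * ((volume (ball a t))⁻¹ * W) ^ (1 / q) := by
    rw [← ENNReal.mul_rpow_of_nonneg _ _ hq1, ← mul_assoc, ENNReal.mul_inv_cancel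
      (measure_ball_pos _ _ ht).ne' measure_ball_lt_top.ne, one_mul]
    rfl
  rw [h4, hvol a t ht]
  calc _ ≤ ENNReal.ofReal (V * t ^ ((n:ℝ) - α)) * (ENNReal.ofReal C * ENNReal.ofReal (w y)) := by
        gcongr
    _ = _ := by
        rw [← ENNReal.ofReal_mul hC.le, ← ENNReal.ofReal_mul (by positivity)]
        congr 1; ring

theorem ptwise {n : ℕ} {α q D : ℝ} (hα : 0 < α) (hαn : α < n) (hq : 1 / q = 1 - α / n)
    (hD : 0 < D) (w : EuclideanSpace ℝ (Fin n) → ℝ) (hw : IsWeight w)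
    (ν : Measure (EuclideanSpace ℝ (Fin n)))
    (hkey : ∀ (a : EuclideanSpace ℝ (Fin n)) (t : ℝ), 0 < t →
      ∀ᵐ y, y ∈ ball a t → ν (ball a t) ^ (1 / q) ≤
        ENNReal.ofReal (D * t ^ ((n:ℝ) - α) * w y)) :
    ∀ᵐ y, ∀ t, 0 < t → ν (ball y t) ≤ ENNReal.ofReal ((D ^ q * 3 ^ (n:ℝ)) * t ^ (n:ℝ) * w y ^ q) := by
  have hn : (0:ℝ) < n := hα.trans hαn
  have hq0 : q = n / (n - α) := by
    have : q = 1 / (1 / q) := by simp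
    rw [this, hq]; field_simp
  have hβ : 0 < (n:ℝ) - α := by linarith
  have hqp : 0 < q := by rw [hq0]; positivity
  have hall : ∀ᵐ y, ∀ (i : ℕ) (s : ℚ), 0 < (s:ℝ) →
      y ∈ ball (TopologicalSpace.denseSeq (EuclideanSpace ℝ (Fin n)) i) (s:ℝ) →
      ν (ball (TopologicalSpace.denseSeq (EuclideanSpace ℝ (Fin n)) i) (s:ℝ)) ^ (1 / q) ≤
        ENNReal.ofReal (D * (s:ℝ) ^ ((n:ℝ) - α) * w y) := by
    rw [ae_all_iff]; intro i
    rw [ae_all_iff]; intro s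
    by_cases hs : 0 < (s:ℝ)
    · filter_upwards [hkey (TopologicalSpace.denseSeq (EuclideanSpace ℝ (Fin n)) i) s hs] with y hy _
      exact hy
    · exact Filter.Eventually.of_forall fun y h => absurd h hs
  filter_upwards [hall] with y hy t ht
  obtain ⟨i, hi⟩ := (TopologicalSpace.denseRange_denseSeq
    (EuclideanSpace ℝ (Fin n))).exists_mem_open (isOpen_ball (x := y) (ε := t)) ⟨y, mem_ball_self ht⟩
  obtain ⟨s, hs1, hs2⟩ := exists_rat_btwn (show 2 * t < 3 * t by linarith)
  have hs0 : (0:ℝ) < s := by linarith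
  rw [mem_ball] at hi
  have h1 := hy i s hs0 (by rw [mem_ball, dist_comm]; linarith)
  rw [one_div, ENNReal.rpow_inv_le_iff hqp] at h1
  have hwy : 0 ≤ w y := hw.2.1 y
  calc ν (ball y t) ≤ ν (ball (TopologicalSpace.denseSeq (EuclideanSpace ℝ (Fin n)) i) (s:ℝ)) := by
        apply measure_mono
        apply ball_subset_ball'
        rw [dist_comm]; linarith
    _ ≤ _ := h1
    _ ≤ ENNReal.ofReal (D * (3 * t) ^ ((n:ℝ) - α) * w y) ^ q := by
        gcongr
    _ = _ := by
        rw [ENNReal.ofReal_rpow_of_nonneg (by positivity) hqp.le]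
        congr 1
        rw [Real.mul_rpow (by positivity) hwy, Real.mul_rpow hD.le (by positivity),
          ← Real.rpow_mul (by positivity), mul_assoc (D ^ q) (3 ^ (n:ℝ)),
          ← Real.mul_rpow (by positivity) ht.le]
        congr 3
        rw [hq0]; field_simp

theorem doubling {n : ℕ} {α q D V : ℝ} (hα : 0 < α) (hαn : α < n) (hq : 1 / q = 1 - α / n)
    (hD : 0 < D) (w : EuclideanSpace ℝ (Fin n) → ℝ) (hw : IsWeight w)
    (hvol : ∀ (a : EuclideanSpace ℝ (Fin n)) (t : ℝ), 0 < t →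
      volume (ball a t) ^ (1 / q) = ENNReal.ofReal (V * t ^ ((n:ℝ) - α)))
    (ν : Measure (EuclideanSpace ℝ (Fin n)))
    (hνd : ν = volume.withDensity (fun x => ENNReal.ofReal (w x ^ q)))
    (hkey : ∀ (a : EuclideanSpace ℝ (Fin n)) (t : ℝ), 0 < t →
      ∀ᵐ y, y ∈ ball a t → ν (ball a t) ^ (1 / q) ≤
        ENNReal.ofReal (D * t ^ ((n:ℝ) - α) * w y))
    (a : EuclideanSpace ℝ (Fin n)) {r t : ℝ} (hr : 0 < r) (hrt : r ≤ t) :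
    ν (ball a t) ^ (1 / q) * ENNReal.ofReal (V * r ^ ((n:ℝ) - α)) ≤
      ENNReal.ofReal (D * t ^ ((n:ℝ) - α)) * ν (ball a r) ^ (1 / q) := by
  have hn : (0:ℝ) < n := hα.trans hαn
  have hq0 : q = n / (n - α) := by
    have : q = 1 / (1 / q) := by simp
    rw [this, hq]; field_simp
  have hβ : 0 < (n:ℝ) - α := by linarith
  have hqp : 0 < q := by rw [hq0]; positivity
  have hq1 : 0 ≤ 1 / q := by positivity
  have ht : 0 < t := hr.trans_le hrt
  have h1 : ν (ball a t) * volume (ball a r) ≤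
      ENNReal.ofReal (D * t ^ ((n:ℝ) - α)) ^ q * ν (ball a r) := by
    rw [hνd, withDensity_apply _ (measurableSet_ball (x := a) (ε := r)), ← hνd,
      ← lintegral_const_mul' _ _ (ENNReal.rpow_ne_top_of_nonneg hqp.le ENNReal.ofReal_ne_top),
      ← setLIntegral_const]
    apply lintegral_mono_ae
    rw [ae_restrict_iff' measurableSet_ball]
    filter_upwards [hkey a t ht] with y hy hyr
    have h2 := hy (ball_subset_ball hrt hyr)
    rw [one_div, ENNReal.rpow_inv_le_iff hqp, ENNReal.ofReal_mul (by positivity),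
      ENNReal.mul_rpow_of_nonneg _ _ hqp.le,
      ENNReal.ofReal_rpow_of_nonneg (hw.2.1 y) hqp.le] at h2
    exact h2
  have h2 := ENNReal.rpow_le_rpow h1 hq1
  rw [ENNReal.mul_rpow_of_nonneg _ _ hq1, ENNReal.mul_rpow_of_nonneg _ _ hq1, hvol a r hr,
    ← ENNReal.rpow_mul, mul_one_div_cancel hqp.ne', ENNReal.rpow_one] at h2
  exact h2

theorem weak_type {n : ℕ} {α q D : ℝ} (hα : 0 < α) (hαn : α < n) (hq : 1 / q = 1 - α / n)
    (hD : 0 < D) (w : EuclideanSpace ℝ (Fin n) → ℝ) (hw : IsWeight w)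
    (ν : Measure (EuclideanSpace ℝ (Fin n))) [SFinite ν] (hac : ν ≪ volume)
    (hpt : ∀ᵐ y, ∀ t, 0 < t → ν (ball y t) ≤ ENNReal.ofReal (D * t ^ (n:ℝ) * w y ^ q))
    (g : EuclideanSpace ℝ (Fin n) → ℝ≥0∞) (hg : Measurable g)
    (B : Set (EuclideanSpace ℝ (Fin n))) (hB : MeasurableSet B) (hBf : ν B ≠ ⊤) (γ : ℝ≥0∞) :
    γ * ν {x | x ∈ B ∧ γ < ∫⁻ y, g y / ENNReal.ofReal (dist x y ^ ((n:ℝ) - α))} ^ (1 / q) ≤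
      ENNReal.ofReal (((n:ℝ) - α) * D / α + 1) * ∫⁻ y, g y * ENNReal.ofReal (w y) := by
  have hn : (0:ℝ) < n := hα.trans hαn
  have hβ : 0 < (n:ℝ) - α := by linarith
  have hq1 : 0 < 1 / q := by
    rw [hq, sub_pos, div_lt_one hn]; exact hαn
  have : Nonempty (Fin n) := ⟨⟨0, by exact_mod_cast hn⟩⟩
  have hk : Measurable (Function.uncurry (fun x y : EuclideanSpace ℝ (Fin n) =>
      g y / ENNReal.ofReal (dist x y ^ ((n:ℝ) - α)))) := by
    unfold Function.uncurry
    fun_prop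
  have hI : Measurable (fun x => ∫⁻ y, g y / ENNReal.ofReal (dist x y ^ ((n:ℝ) - α))) :=
    hk.lintegral_prod_right'
  set E := {x | x ∈ B ∧ γ < ∫⁻ y, g y / ENNReal.ofReal (dist x y ^ ((n:ℝ) - α))} with hE
  have hEm : MeasurableSet E := hB.inter (measurableSet_lt measurable_const hI)
  have hEB : E ⊆ B := fun x hx => hx.1
  have hEf : ν E ≠ ⊤ := ne_top_of_le_ne_top hBf (measure_mono hEB)
  rcases eq_or_ne (ν E) 0 with h0 | h0
  · rw [h0, ENNReal.zero_rpow_of_pos hq1, mul_zero]; exact bot_le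
  set e := (ν E).toReal with he
  have hep : 0 < e := ENNReal.toReal_pos h0 hEf
  have hEe : ν E = ENNReal.ofReal e := (ENNReal.ofReal_toReal hEf).symm
  have h1 : γ * ν E ≤ ENNReal.ofReal ((((n:ℝ) - α) * D / α + 1) * e ^ (α / n)) *
      ∫⁻ y, g y * ENNReal.ofReal (w y) := by
    calc γ * ν E ≤ ∫⁻ x in E, (∫⁻ y, g y / ENNReal.ofReal (dist x y ^ ((n:ℝ) - α))) ∂ν := by
          rw [← setLIntegral_const]
          exact setLIntegral_mono' hEm fun x hx => hx.2.le
      _ = ∫⁻ y, (∫⁻ x in E, g y / ENNReal.ofReal (dist x y ^ ((n:ℝ) - α)) ∂ν) :=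
          lintegral_lintegral_swap hk.aemeasurable
      _ ≤ ∫⁻ y, ENNReal.ofReal ((((n:ℝ) - α) * D / α + 1) * e ^ (α / n)) *
            (g y * ENNReal.ofReal (w y)) := by
          apply lintegral_mono_ae
          filter_upwards [hpt, hw.2.2.2] with y hy hwy
          have hyn : ∀ᵐ x ∂ν, x ≠ y := hac.ae_le (compl_mem_ae_iff.2 (measure_singleton y))
          simp only [div_eq_mul_inv]
          rw [lintegral_const_mul _ (by fun_prop)]
          calc _ ≤ g y * ENNReal.ofReal ((((n:ℝ) - α) * D / α + 1) * e ^ (α / n) * w y) := by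
                gcongr
                exact ker_weak hα hαn hD hwy hep hq ν y hyn hy E hEe
            _ = _ := by
                rw [ENNReal.ofReal_mul (by positivity)]; simp only [div_eq_mul_inv]; ring
      _ = _ := lintegral_const_mul' _ _ ENNReal.ofReal_ne_top
  have h2 : ν E ^ (1 / q) = ν E * ENNReal.ofReal (e ^ (-(α / n))) := by
    rw [hEe, ENNReal.ofReal_rpow_of_pos hep, ← ENNReal.ofReal_mul hep.le, hq, sub_eq_add_neg,
      Real.rpow_add hep, Real.rpow_one]
  calc _ = γ * ν E * ENNReal.ofReal (e ^ (-(α / n))) := by rw [h2, mul_assoc]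
    _ ≤ _ := mul_le_mul_left h1 _
    _ = _ := by
      rw [mul_right_comm, ← ENNReal.ofReal_mul (by positivity), mul_assoc _ (e ^ (α / n)),
        ← Real.rpow_add hep, add_neg_cancel, Real.rpow_zero, mul_one]

theorem local_part {n : ℕ} {α D V : ℝ} (hαn : α < n) (hD : 0 < D) (hV : 0 < V)
    (F M : ℝ → ℝ≥0∞) (r : ℝ) (hr : 0 < r)
    (hF0 : ∀ t, 0 < t → F t ≠ 0) (hFt : ∀ t, 0 < t → F t ≠ ⊤)
    (hdb : ∀ t, r ≤ t → F t * ENNReal.ofReal (V * r ^ ((n:ℝ) - α)) ≤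
      ENNReal.ofReal (D * t ^ ((n:ℝ) - α)) * F r)
    (hM : Monotone M) :
    M (2 * r) ≤ ENNReal.ofReal (D * 2 ^ ((n:ℝ) - α) * ((n:ℝ) - α) / V) *
      (F r * ∫⁻ t in Ioi (2 * r), M t * (F t)⁻¹ * ENNReal.ofReal t⁻¹) := by
  have hβ : 0 < (n:ℝ) - α := by linarith
  set β := (n:ℝ) - α with hβd
  have h2r : 0 < 2 * r := by linarith
  have h1 : M (2 * r) * ENNReal.ofReal (V / (D * 2 ^ β * β)) ≤
      F r * ∫⁻ t in Ioi (2 * r), M t * (F t)⁻¹ * ENNReal.ofReal t⁻¹ := by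
    have e1 : V / (D * 2 ^ β * β) = (V / D * r ^ β) * ((2 * r) ^ (-β) / β) := by
      rw [Real.rpow_neg h2r.le, Real.mul_rpow (by norm_num) hr.le]
      field_simp
    rw [e1, ENNReal.ofReal_mul (by positivity), ← ker_lint hβ h2r, ← mul_assoc,
      ← lintegral_const_mul _ (by fun_prop), ← lintegral_const_mul' _ _ (hFt r hr)]
    apply setLIntegral_mono' measurableSet_Ioi
    intro t ht
    have ht0 : 0 < t := h2r.trans ht
    have hrt : r ≤ t := by have : 2 * r < t := ht; linarith
    have h2 : ENNReal.ofReal (V / D * r ^ β * t ^ (-β)) ≤ F r * (F t)⁻¹ := by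
      rw [← div_eq_mul_inv, ENNReal.le_div_iff_mul_le (Or.inl (hF0 t ht0)) (Or.inl (hFt t ht0))]
      have h3 := hdb t hrt
      have e2 : ENNReal.ofReal (V / D * r ^ β * t ^ (-β)) * F t =
          (F t * ENNReal.ofReal (V * r ^ β)) * ENNReal.ofReal (t ^ (-β) / D) := by
        rw [mul_assoc (F t), ← ENNReal.ofReal_mul (by positivity), mul_comm]
        congr 2; ring
      rw [e2]
      calc _ ≤ ENNReal.ofReal (D * t ^ β) * F r * ENNReal.ofReal (t ^ (-β) / D) := by gcongr
        _ = F r := by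
          rw [mul_right_comm, ← ENNReal.ofReal_mul (by positivity)]
          have : D * t ^ β * (t ^ (-β) / D) = 1 := by
            rw [Real.rpow_neg ht0.le]; field_simp
          rw [this, ENNReal.ofReal_one, one_mul]
    calc M (2 * r) * ENNReal.ofReal (V / D * r ^ β) * ENNReal.ofReal (t ^ (-β - 1))
        = M (2 * r) * ENNReal.ofReal (V / D * r ^ β * t ^ (-β)) * ENNReal.ofReal t⁻¹ := by
          rw [mul_assoc, mul_assoc, ← ENNReal.ofReal_mul (by positivity),
            ← ENNReal.ofReal_mul (by positivity), Real.rpow_sub_one ht0.ne']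
          congr 2; ring
      _ ≤ M t * (F r * (F t)⁻¹) * ENNReal.ofReal t⁻¹ := by
          gcongr
          exact hM (le_of_lt ht)
      _ = _ := by ring
  calc M (2 * r) = ENNReal.ofReal (D * 2 ^ β * β / V) *
        (M (2 * r) * ENNReal.ofReal (V / (D * 2 ^ β * β))) := by
        rw [mul_left_comm, ← ENNReal.ofReal_mul (by positivity)]
        have : D * 2 ^ β * β / V * (V / (D * 2 ^ β * β)) = 1 := by field_simp
        rw [this, ENNReal.ofReal_one, mul_one]
    _ ≤ _ := by gcongr

theorem far_part {n : ℕ} {α D q : ℝ} (hαn : α < n) (hD : 0 < D)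
    (w : EuclideanSpace ℝ (Fin n) → ℝ) (hw : IsWeight w)
    (ν : Measure (EuclideanSpace ℝ (Fin n)))
    (hν0 : ∀ a t, 0 < t → ν (ball a t) ^ (1 / q) ≠ 0)
    (hνt : ∀ a t, 0 < t → ν (ball a t) ^ (1 / q) ≠ ⊤)
    (hkey : ∀ (a : EuclideanSpace ℝ (Fin n)) (t : ℝ), 0 < t →
      ∀ᵐ y, y ∈ ball a t → ν (ball a t) ^ (1 / q) ≤
        ENNReal.ofReal (D * t ^ ((n:ℝ) - α) * w y))
    (g : EuclideanSpace ℝ (Fin n) → ℝ≥0∞) (hg : Measurable g)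
    (a x : EuclideanSpace ℝ (Fin n)) (r : ℝ) (hr : 0 < r) (hx : x ∈ ball a r) :
    ∫⁻ y in (ball a (2 * r))ᶜ, g y / ENNReal.ofReal (dist x y ^ ((n:ℝ) - α)) ≤
      ENNReal.ofReal (2 ^ ((n:ℝ) - α) * ((n:ℝ) - α) * D) *
        ∫⁻ t in Ioi (2 * r), (∫⁻ y in ball a t, g y * ENNReal.ofReal (w y)) *
          (ν (ball a t) ^ (1 / q))⁻¹ * ENNReal.ofReal t⁻¹ := by
  have hβ : 0 < (n:ℝ) - α := by linarith
  set β := (n:ℝ) - α with hβd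
  have h2r : 0 < 2 * r := by linarith
  set μ : Measure (EuclideanSpace ℝ (Fin n)) :=
    (volume.restrict (ball a (2 * r))ᶜ).withDensity g with hμ
  have hμa : ∀ᵐ y ∂μ, y ≠ a := by
    apply (withDensity_absolutelyContinuous _ _).ae_le
    filter_upwards [ae_restrict_mem (measurableSet_ball (x := a) (ε := 2 * r)).compl] with y hy h
    exact hy (h ▸ mem_ball_self h2r)
  calc _ ≤ ∫⁻ y in (ball a (2 * r))ᶜ, ENNReal.ofReal (2 ^ β) *
        (g y * (ENNReal.ofReal (dist y a ^ β))⁻¹) := by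
        apply setLIntegral_mono' measurableSet_ball.compl
        intro y hy
        have hy2 : 2 * r ≤ dist y a := by simpa using hy
        have hxa : dist x a < r := hx
        have hd : dist y a / 2 ≤ dist x y := by
          have := dist_triangle y x a
          rw [dist_comm y x] at this
          linarith
        have hya : 0 < dist y a := by linarith
        rw [div_eq_mul_inv, mul_left_comm]
        gcongr
        rw [← ENNReal.ofReal_inv_of_pos (Real.rpow_pos_of_pos (by linarith) _),
          ← ENNReal.ofReal_inv_of_pos (Real.rpow_pos_of_pos (by linarith) _),
          ← ENNReal.ofReal_mul (by positivity)]
        apply ENNReal.ofReal_le_ofReal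
        calc (dist x y ^ β)⁻¹ ≤ ((dist y a / 2) ^ β)⁻¹ := by gcongr
          _ = _ := by rw [Real.div_rpow hya.le (by norm_num)]; field_simp
    _ = ENNReal.ofReal (2 ^ β) * ∫⁻ y, (ENNReal.ofReal (dist y a ^ β))⁻¹ ∂μ := by
        rw [lintegral_const_mul' _ _ ENNReal.ofReal_ne_top, hμ,
          lintegral_withDensity_eq_lintegral_mul _ hg (by fun_prop)]
        rfl
    _ = ENNReal.ofReal (2 ^ β) * (ENNReal.ofReal β *
          ∫⁻ t in Ioi (0:ℝ), ENNReal.ofReal (t ^ (-β - 1)) * μ (ball a t)) := by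
        rw [fubini_ker hβ μ a hμa]
    _ ≤ ENNReal.ofReal (2 ^ β) * (ENNReal.ofReal β *
          ∫⁻ t in Ioi (2 * r), ENNReal.ofReal D * ((∫⁻ y in ball a t, g y * ENNReal.ofReal (w y)) *
          (ν (ball a t) ^ (1 / q))⁻¹ * ENNReal.ofReal t⁻¹)) := by
        gcongr ENNReal.ofReal (2 ^ β) * (ENNReal.ofReal β * ?_)
        rw [← lintegral_indicator measurableSet_Ioi, ← lintegral_indicator measurableSet_Ioi]
        apply lintegral_mono
        intro t
        by_cases ht : 2 * r < t
        · have ht0 : 0 < t := h2r.trans ht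
          rw [indicator_of_mem (show t ∈ Ioi (0:ℝ) from ht0), indicator_of_mem (show t ∈ Ioi (2 * r) from ht)]
          have h1 : μ (ball a t) ≤ ∫⁻ y in ball a t, g y := by
            rw [hμ, withDensity_apply _ measurableSet_ball, Measure.restrict_restrict measurableSet_ball]
            exact lintegral_mono_set inter_subset_left
          have h2 : (∫⁻ y in ball a t, g y) ≤ ENNReal.ofReal (D * t ^ β) *
              (∫⁻ y in ball a t, g y * ENNReal.ofReal (w y)) * (ν (ball a t) ^ (1 / q))⁻¹ := by
            rw [← div_eq_mul_inv, ENNReal.le_div_iff_mul_le (Or.inl (hν0 a t ht0))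
              (Or.inl (hνt a t ht0)), ← lintegral_mul_const' _ _ (hνt a t ht0),
              ← lintegral_const_mul' _ _ ENNReal.ofReal_ne_top]
            apply lintegral_mono_ae
            rw [ae_restrict_iff' measurableSet_ball]
            filter_upwards [hkey a t ht0] with y hy hyt
            rw [mul_left_comm, ← ENNReal.ofReal_mul (by positivity)]
            gcongr
            exact hy hyt
          calc ENNReal.ofReal (t ^ (-β - 1)) * μ (ball a t) ≤
              ENNReal.ofReal (t ^ (-β - 1)) * (ENNReal.ofReal (D * t ^ β) *
              (∫⁻ y in ball a t, g y * ENNReal.ofReal (w y)) * (ν (ball a t) ^ (1 / q))⁻¹) := by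
                gcongr; exact h1.trans h2
            _ = (ENNReal.ofReal (t ^ (-β - 1)) * ENNReal.ofReal (D * t ^ β)) *
              ((∫⁻ y in ball a t, g y * ENNReal.ofReal (w y)) * (ν (ball a t) ^ (1 / q))⁻¹) := by
                ring
            _ = (ENNReal.ofReal D * ENNReal.ofReal t⁻¹) *
              ((∫⁻ y in ball a t, g y * ENNReal.ofReal (w y)) * (ν (ball a t) ^ (1 / q))⁻¹) := by
                rw [← ENNReal.ofReal_mul (by positivity), ← ENNReal.ofReal_mul (by positivity)]
                congr 2
                rw [Real.rpow_sub_one ht0.ne', Real.rpow_neg ht0.le]; field_simp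
            _ = _ := by ring
        · have h1 : μ (ball a t) = 0 := by
            rw [hμ, withDensity_apply _ measurableSet_ball, Measure.restrict_restrict measurableSet_ball]
            have : ball a t ∩ (ball a (2 * r))ᶜ = ∅ := by
              rw [← sdiff_eq]
              exact sdiff_eq_empty.2 (ball_subset_ball (not_lt.1 ht))
            rw [this]; simp
          simp only [indicator, h1, mul_zero, ite_self]
          exact bot_le
    _ = _ := by
        rw [lintegral_const_mul' _ _ ENNReal.ofReal_ne_top, ENNReal.ofReal_mul (by positivity),
          ENNReal.ofReal_mul (by positivity)]
        ring
/-- Let `0 < α < n`, `1/q = 1 − α/n`, `w ∈ A_{1,q}`, and let `ψ₁, ψ₂` be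
positive functions on `ℝⁿ × (0,∞)` with
`∫_r^∞ (w(B(a,t))/w^q(B(a,t))^{1/q})·ψ₁(a,t) dt/t ≤ C·ψ₂(a,r)` for all `(a,r)`.
Then `I_α` is bounded from `M^{1,w}_{ψ₁}` to `WM^{q,w^q}_{ψ₂}`. -/
theorem statement15 {n : ℕ} (α q : ℝ) (hα : 0 < α) (hαn : α < n)
    (hq : 1 / q = 1 - α / n)
    (w : EuclideanSpace ℝ (Fin n) → ℝ) (hw : IsWeight w) (hA1q : MuckA1q q w)
    (ψ₁ ψ₂ : EuclideanSpace ℝ (Fin n) → ℝ → ℝ)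
    (hψ₁ : ∀ a r, 0 < r → 0 < ψ₁ a r) (hψ₂ : ∀ a r, 0 < r → 0 < ψ₂ a r)
    (C : ℝ) (hC : 0 < C)
    (hcond : ∀ (a : EuclideanSpace ℝ (Fin n)) (r : ℝ), 0 < r →
      (∫⁻ t in Set.Ioi r,
        wSet w (ball a t) * wSet (fun x => w x ^ q) (ball a t) ^ (-(1 / q)) *
          ENNReal.ofReal (ψ₁ a t) * ENNReal.ofReal t⁻¹) ≤
        ENNReal.ofReal (C * ψ₂ a r)) :
    ∃ C' : ℝ, 0 < C' ∧ ∀ f : EuclideanSpace ℝ (Fin n) → ℝ,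
      MemLocWLp 1 w f → morreyNorm 1 w ψ₁ f < ⊤ →
      morreyWeakNormE q (fun x => w x ^ q) ψ₂ (fracIntE α f) ≤
        ENNReal.ofReal C' * morreyNorm 1 w ψ₁ f := by
  have hn : (0:ℝ) < n := hα.trans hαn
  have hq0 : q = n / (n - α) := by
    have : q = 1 / (1 / q) := by simp
    rw [this, hq]; field_simp
  have hβ : 0 < (n:ℝ) - α := by linarith
  have hqp : 0 < q := by rw [hq0]; positivity
  have hq1 : 0 < 1 / q := by positivity
  obtain ⟨V, hV, hvol⟩ := vol_rpow hα hαn hq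
  obtain ⟨D, hD, hkey⟩ := key_bound hα hαn hq w hw hA1q
  have hwm : Measurable w := hw.1
  set ν : Measure (EuclideanSpace ℝ (Fin n)) :=
    volume.withDensity (fun x => ENNReal.ofReal (w x ^ q)) with hνd
  have hwS : ∀ E, wSet (fun x => w x ^ q) E = ν E := fun E => (withDensity_apply' _ E).symm
  simp only [hwS] at hkey hcond
  have hac : ν ≪ volume := withDensity_absolutelyContinuous _ _
  have hac' : volume ≪ ν := by
    apply withDensity_absolutelyContinuous' (by fun_prop)
    filter_upwards [hw.2.2.2] with x hx
    simpa using Real.rpow_pos_of_pos hx q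
  have hν0 : ∀ (a : EuclideanSpace ℝ (Fin n)) (t : ℝ), 0 < t → ν (ball a t) ≠ 0 :=
    fun a t ht h => (measure_ball_pos volume a ht).ne' (hac' h)
  have hF0 : ∀ (a : EuclideanSpace ℝ (Fin n)) (t : ℝ), 0 < t → ν (ball a t) ^ (1 / q) ≠ 0 := by
    intro a t ht h
    rw [ENNReal.rpow_eq_zero_iff_of_pos hq1] at h
    exact hν0 a t ht h
  have hFt : ∀ (a : EuclideanSpace ℝ (Fin n)) (t : ℝ), 0 < t → ν (ball a t) ^ (1 / q) ≠ ⊤ := by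
    intro a t ht
    have hne : (ae (volume.restrict (ball a t))).NeBot := by
      rw [ae_neBot, Ne, Measure.restrict_eq_zero]
      exact (measure_ball_pos volume a ht).ne'
    obtain ⟨y, hy⟩ := ((ae_restrict_iff' measurableSet_ball).2 (hkey a t ht)).exists
    exact ne_top_of_le_ne_top ENNReal.ofReal_ne_top hy
  have hνt : ∀ (a : EuclideanSpace ℝ (Fin n)) (t : ℝ), 0 < t → ν (ball a t) ≠ ⊤ := by
    intro a t ht h
    apply hFt a t ht
    rw [h, ENNReal.top_rpow_of_pos hq1]
  have hpt := ptwise hα hαn hq hD w hw ν hkey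
  set D1 : ℝ := D ^ q * 3 ^ (n:ℝ) with hD1
  have hD1p : 0 < D1 := by positivity
  set K0 : ℝ := ((n:ℝ) - α) * D1 / α + 1 with hK0
  set K1 : ℝ := D * 2 ^ ((n:ℝ) - α) * ((n:ℝ) - α) / V with hK1
  set K2 : ℝ := 2 ^ ((n:ℝ) - α) * ((n:ℝ) - α) * D with hK2
  have hK0p : 0 < K0 := by positivity
  have hK1p : 0 < K1 := by positivity
  have hK2p : 0 < K2 := by positivity
  have hW0 : ∀ (a : EuclideanSpace ℝ (Fin n)) (t : ℝ), 0 < t → wSet w (ball a t) ≠ 0 := by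
    intro a t ht h
    have hac2 : volume ≪ volume.withDensity (fun x => ENNReal.ofReal (w x)) := by
      apply withDensity_absolutelyContinuous' (by fun_prop)
      filter_upwards [hw.2.2.2] with x hx
      simpa using hx
    refine (measure_ball_pos volume a ht).ne' (hac2 ?_)
    rw [withDensity_apply']; exact h
  have hWt : ∀ (a : EuclideanSpace ℝ (Fin n)) (t : ℝ), 0 < t → wSet w (ball a t) ≠ ⊤ := by
    intro a t ht
    have h1 : IntegrableOn w (closedBall a t) :=
      hw.2.2.1.integrableOn_isCompact (isCompact_closedBall a t)
    exact (h1.mono_set ball_subset_closedBall).lintegral_lt_top.ne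
  refine ⟨(2 * K2 + 2 * (K0 * K1)) * C, by positivity, ?_⟩
  intro f hf hN
  set N := morreyNorm 1 w ψ₁ f with hNdef
  have hfm : Measurable f := hf.1
  unfold morreyWeakNormE
  refine iSup_le fun a => iSup_le fun r' => ?_
  obtain ⟨r, hr⟩ := r'
  have hr : 0 < r := hr
  simp only [hwS, wWeakLpE]
  set M : ℝ → ℝ≥0∞ := fun t => ∫⁻ x in ball a t, ENNReal.ofReal |f x| * ENNReal.ofReal (w x) with hM
  have hMN : ∀ t, 0 < t → M t ≤ N * (ENNReal.ofReal (ψ₁ a t) * wSet w (ball a t)) := by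
    intro t ht
    have h1 : (ENNReal.ofReal (ψ₁ a t))⁻¹ * wSet w (ball a t) ^ (-(1 / (1:ℝ))) *
        wLp 1 w f (ball a t) ≤ N :=
      le_iSup₂_of_le (f := fun (a : EuclideanSpace ℝ (Fin n)) (r : Set.Ioi (0 : ℝ)) =>
        (ENNReal.ofReal (ψ₁ a r.1))⁻¹ * wSet w (ball a r.1) ^ (-(1 / (1:ℝ))) *
          wLp 1 w f (ball a r.1)) a ⟨t, ht⟩ le_rfl
    have h2 : wLp 1 w f (ball a t) = M t := by
      simp [wLp, hM]
    have hp0 : ENNReal.ofReal (ψ₁ a t) ≠ 0 := by simpa using hψ₁ a t ht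
    rw [h2, div_one, ENNReal.rpow_neg_one, ← ENNReal.mul_inv (Or.inl hp0)
      (Or.inl ENNReal.ofReal_ne_top), mul_comm, ← div_eq_mul_inv, ENNReal.div_le_iff
      (mul_ne_zero hp0 (hW0 a t ht)) (ENNReal.mul_ne_top ENNReal.ofReal_ne_top (hWt a t ht))] at h1
    exact h1
  set J := ∫⁻ t in Ioi (2 * r), M t * (ν (ball a t) ^ (1 / q))⁻¹ * ENNReal.ofReal t⁻¹ with hJ
  have hJN : J ≤ N * ENNReal.ofReal (C * ψ₂ a r) := by
    calc J ≤ ∫⁻ t in Ioi r, M t * (ν (ball a t) ^ (1 / q))⁻¹ * ENNReal.ofReal t⁻¹ :=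
          lintegral_mono_set (Ioi_subset_Ioi (by linarith))
      _ ≤ ∫⁻ t in Ioi r, N * (wSet w (ball a t) * ν (ball a t) ^ (-(1 / q)) *
          ENNReal.ofReal (ψ₁ a t) * ENNReal.ofReal t⁻¹) := by
          apply setLIntegral_mono' measurableSet_Ioi
          intro t ht
          rw [ENNReal.rpow_neg]
          calc _ ≤ N * (ENNReal.ofReal (ψ₁ a t) * wSet w (ball a t)) *
                (ν (ball a t) ^ (1 / q))⁻¹ * ENNReal.ofReal t⁻¹ := by
                gcongr; exact hMN t (hr.trans ht)
            _ = _ := by ring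
      _ = N * _ := lintegral_const_mul' _ _ hN.ne
      _ ≤ _ := by gcongr; exact hcond a r hr
  have hMmono : Monotone M := fun s t hst => lintegral_mono_set (ball_subset_ball hst)
  have hP1 : M (2 * r) ≤ ENNReal.ofReal K1 * (ν (ball a r) ^ (1 / q) * J) :=
    local_part hαn hD hV (fun t => ν (ball a t) ^ (1 / q)) M r hr (hF0 a) (hFt a)
      (fun t ht => doubling hα hαn hq hD w hw hvol ν hνd hkey a hr ht) hMmono
  have hP2 : ∀ x ∈ ball a r, ∫⁻ y in (ball a (2 * r))ᶜ,
      ENNReal.ofReal |f y| / ENNReal.ofReal (dist x y ^ ((n:ℝ) - α)) ≤ ENNReal.ofReal K2 * J :=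
    fun x hx => far_part hαn hD w hw ν hF0 hFt hkey (fun y => ENNReal.ofReal |f y|)
      (by fun_prop) a x r hr hx
  set g : EuclideanSpace ℝ (Fin n) → ℝ≥0∞ :=
    (ball a (2 * r)).indicator (fun y => ENNReal.ofReal |f y|) with hg
  have hgm : Measurable g := Measurable.indicator (by fun_prop) measurableSet_ball
  have hsplit : ∀ x, fracIntE α f x = (∫⁻ y, g y / ENNReal.ofReal (dist x y ^ ((n:ℝ) - α))) +
      ∫⁻ y in (ball a (2 * r))ᶜ,
        ENNReal.ofReal |f y| / ENNReal.ofReal (dist x y ^ ((n:ℝ) - α)) := by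
    intro x
    unfold fracIntE
    rw [← lintegral_add_compl _ (measurableSet_ball (x := a) (ε := 2 * r))]
    congr 1
    rw [← lintegral_indicator measurableSet_ball]
    apply lintegral_congr
    intro y
    by_cases hy : y ∈ ball a (2 * r)
    · simp only [hg, indicator_of_mem hy]
    · simp only [hg, indicator_of_notMem hy, ENNReal.zero_div]
  have hgM : ∫⁻ y, g y * ENNReal.ofReal (w y) = M (2 * r) := by
    simp only [hM]
    rw [← lintegral_indicator measurableSet_ball]
    apply lintegral_congr
    intro y
    by_cases hy : y ∈ ball a (2 * r)
    · simp only [hg, indicator_of_mem hy]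
    · simp only [hg, indicator_of_notMem hy, zero_mul]
  have hsup : (⨆ γ : Set.Ioi (0 : ℝ), ENNReal.ofReal γ.1 *
      (ν {x | x ∈ ball a r ∧ ENNReal.ofReal γ.1 < fracIntE α f x}) ^ (1 / q)) ≤
      ENNReal.ofReal (2 * K2 + 2 * (K0 * K1)) * (ν (ball a r) ^ (1 / q) * J) := by
    refine iSup_le fun γ' => ?_
    obtain ⟨γ, hγ⟩ := γ'
    have hγ : 0 < γ := hγ
    have hcc : ENNReal.ofReal γ = 2 * ENNReal.ofReal (γ / 2) := by
      rw [show (2 : ℝ≥0∞) = ENNReal.ofReal 2 by simp, ← ENNReal.ofReal_mul (by norm_num)]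
      congr 1; ring
    simp only
    rw [hcc, ENNReal.ofReal_add (by positivity) (by positivity), add_mul]
    set c := ENNReal.ofReal (γ / 2) with hc
    rcases le_or_gt c (ENNReal.ofReal K2 * J) with hle | hlt
    · refine le_trans ?_ le_self_add
      calc _ ≤ 2 * (ENNReal.ofReal K2 * J) * ν (ball a r) ^ (1 / q) := by
            gcongr
            exact fun x hx => hx.1
        _ = _ := by
          rw [ENNReal.ofReal_mul (p := 2) (by norm_num), ENNReal.ofReal_ofNat]; ring
    · refine le_trans ?_ le_add_self
      have hsub : {x | x ∈ ball a r ∧ 2 * c < fracIntE α f x} ⊆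
          {x | x ∈ ball a r ∧ c < ∫⁻ y, g y / ENNReal.ofReal (dist x y ^ ((n:ℝ) - α))} := by
        rintro x ⟨hx, hx2⟩
        refine ⟨hx, ?_⟩
        by_contra hcon
        rw [not_lt] at hcon
        rw [hsplit x] at hx2
        have := add_le_add hcon ((hP2 x hx).trans hlt.le)
        rw [← two_mul] at this
        exact absurd hx2 (not_lt.2 this)
      have hwk := weak_type hα hαn hq hD1p w hw ν hac hpt g hgm (ball a r) measurableSet_ball
        (hνt a r hr) c
      rw [hgM] at hwk
      calc _ ≤ 2 * c * ν {x | x ∈ ball a r ∧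
            c < ∫⁻ y, g y / ENNReal.ofReal (dist x y ^ ((n:ℝ) - α))} ^ (1 / q) := by gcongr
        _ = 2 * (c * ν {x | x ∈ ball a r ∧
            c < ∫⁻ y, g y / ENNReal.ofReal (dist x y ^ ((n:ℝ) - α))} ^ (1 / q)) := by ring
        _ ≤ 2 * (ENNReal.ofReal K0 * (ENNReal.ofReal K1 * (ν (ball a r) ^ (1 / q) * J))) := by
            gcongr 2 * ?_
            exact hwk.trans (mul_le_mul_right hP1 _)
        _ = _ := by
          rw [ENNReal.ofReal_mul (p := 2) (by norm_num), ENNReal.ofReal_mul hK0p.le, ENNReal.ofReal_ofNat]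
          ring
  have hp2 : 0 < ψ₂ a r := hψ₂ a r hr
  have hp0 : ENNReal.ofReal (ψ₂ a r) ≠ 0 := by simpa using hp2
  rw [ENNReal.rpow_neg]
  calc _ ≤ (ENNReal.ofReal (ψ₂ a r))⁻¹ * (ν (ball a r) ^ (1 / q))⁻¹ *
        (ENNReal.ofReal (2 * K2 + 2 * (K0 * K1)) * (ν (ball a r) ^ (1 / q) *
          (N * ENNReal.ofReal (C * ψ₂ a r)))) := by
        gcongr
        exact hsup.trans (by gcongr)
    _ = ((ENNReal.ofReal (ψ₂ a r))⁻¹ * ENNReal.ofReal (ψ₂ a r)) *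
        ((ν (ball a r) ^ (1 / q))⁻¹ * ν (ball a r) ^ (1 / q)) *
        (ENNReal.ofReal (2 * K2 + 2 * (K0 * K1)) * ENNReal.ofReal C * N) := by
        rw [ENNReal.ofReal_mul hC.le]; ring
    _ = _ := by
        rw [ENNReal.inv_mul_cancel hp0 ENNReal.ofReal_ne_top,
          ENNReal.inv_mul_cancel (hF0 a r hr) (hFt a r hr), one_mul, one_mul,
          ← ENNReal.ofReal_mul (by positivity)]
end

section
/- Let 0 < α < n, 1 < p < n/α, 1/q = 1/p − α/n, and w ∈ A_{p,q}. Suppose ψ₁ and ψ₂ are positive functions on ℝⁿ × (0,∞) for which there is a constant C > 0, independent of a and r, with ∫_r^∞ (w^p(B(a,t))^{1/p} / w^q(B(a,t))^{1/q})·ψ₁(a,t) dt/t ≤ C·ψ₂(a,r) for every (a,r) ∈ ℝⁿ × (0,∞). Then the fractional maximal operator M_α is bounded from M^{p,w^p}_{ψ₁} to M^{q,w^q}_{ψ₂}: there is C' > 0 such that ‖M_α f‖_{M^{q,w^q}_{ψ₂}} ≤ C'·‖f‖_{M^{p,w^p}_{ψ₁}} for every f ∈ M^{p,w^p}_{ψ₁}.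 -/
open MeasureTheory Metric Set
open scoped ENNReal

/-- Uncentred maximal function with respect to `μ`. -/
noncomputable def uMax {X : Type*} [PseudoMetricSpace X] [MeasurableSpace X] (μ : Measure X)
    (g : X → ℝ≥0∞) (x : X) : ℝ≥0∞ :=
  ⨆ (a : X) (r : ℝ) (_ : x ∈ ball a r), (μ (ball a r))⁻¹ * ∫⁻ y in ball a r, g y ∂μ

lemma le_uMax {X : Type*} [PseudoMetricSpace X] [MeasurableSpace X] (μ : Measure X)
    (g : X → ℝ≥0∞) {x a : X} {r : ℝ} (h : x ∈ ball a r) :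
    (μ (ball a r))⁻¹ * ∫⁻ y in ball a r, g y ∂μ ≤ uMax μ g x :=
  le_iSup_of_le a (le_iSup_of_le r (le_iSup_of_le h le_rfl))

lemma lt_uMax_iff {X : Type*} [PseudoMetricSpace X] [MeasurableSpace X] (μ : Measure X)
    (g : X → ℝ≥0∞) {x : X} {c : ℝ≥0∞} :
    c < uMax μ g x ↔ ∃ a r, x ∈ ball a r ∧ c < (μ (ball a r))⁻¹ * ∫⁻ y in ball a r, g y ∂μ := by
  simp only [uMax, lt_iSup_iff, exists_prop]

lemma measurable_uMax {X : Type*} [PseudoMetricSpace X] [MeasurableSpace X]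
    [OpensMeasurableSpace X] (μ : Measure X)
    (g : X → ℝ≥0∞) : Measurable (uMax μ g) := by
  refine measurable_of_Ioi fun c => IsOpen.measurableSet ?_
  rw [Metric.isOpen_iff]
  intro x hx
  obtain ⟨a, r, hxa, hc⟩ := (lt_uMax_iff μ g).1 hx
  obtain ⟨e, he, hsub⟩ := Metric.isOpen_iff.1 isOpen_ball x hxa
  exact ⟨e, he, fun y hy => (lt_uMax_iff μ g).2 ⟨a, r, hsub hy, hc⟩⟩

lemma vitali_bound {X : Type*} [PseudoMetricSpace X] [SecondCountableTopology X] [MeasurableSpace X]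
    [OpensMeasurableSpace X] (μ ν : Measure X) (K : ℝ≥0∞)
    (hK : ∀ a r, 0 < r → μ (ball a (2 * r)) ≤ K * μ (ball a r)) (E : Set X) (c : ℝ≥0∞)
    (hE : ∀ x ∈ E, ∃ a r, x ∈ ball a r ∧ μ (ball a r) ≤ c * ν (ball a r)) :
    μ E ≤ K ^ 3 * c * ν univ := by
  have key : ∀ R : ℕ, μ {x | ∃ a, ∃ r : ℝ, r ≤ R ∧ x ∈ ball a r ∧
      μ (ball a r) ≤ c * ν (ball a r)} ≤ K ^ 3 * c * ν univ := by
    intro R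
    let t : Set (X × ℝ) := {i | 0 < i.2 ∧ i.2 ≤ R ∧ μ (ball i.1 i.2) ≤ c * ν (ball i.1 i.2)}
    obtain ⟨u, hut, hdis, hcov⟩ := Vitali.exists_disjoint_subfamily_covering_enlargement
      (fun i : X × ℝ => ball i.1 i.2) t (fun i => i.2) 2 (by norm_num)
      (fun i hi => hi.1.le) R (fun i hi => hi.2.1) (fun i hi => ⟨i.1, mem_ball_self hi.1⟩)
    have hcount : u.Countable := hdis.countable_of_isOpen (fun i _ => isOpen_ball)
      (fun i hi => ⟨i.1, mem_ball_self (hut hi).1⟩)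
    have hsub : {x | ∃ a, ∃ r : ℝ, r ≤ R ∧ x ∈ ball a r ∧
      μ (ball a r) ≤ c * ν (ball a r)} ⊆ ⋃ i ∈ u, ball i.1 (2 * (2 * (2 * i.2))) := by
      rintro x ⟨a, r, hrR, hx, hm⟩
      have hr : 0 < r := pos_of_mem_ball hx
      obtain ⟨b, hb, ⟨z, hz1, hz2⟩, hle⟩ := hcov (a, r) ⟨hr, hrR, hm⟩
      simp only [mem_iUnion]
      refine ⟨b, hb, ?_⟩
      have hb0 : 0 < b.2 := (hut hb).1
      simp only [mem_ball] at *
      have h1 := dist_triangle x a b.1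
      have h2 := dist_triangle a z b.1
      rw [dist_comm a z] at h2
      linarith
    calc _ ≤ μ (⋃ i ∈ u, ball i.1 (2 * (2 * (2 * i.2)))) := measure_mono hsub
      _ ≤ ∑' i : u, μ (ball i.1.1 (2 * (2 * (2 * i.1.2)))) := measure_biUnion_le _ hcount _
      _ ≤ ∑' i : u, K ^ 3 * c * ν (ball i.1.1 i.1.2) := by
        refine ENNReal.tsum_le_tsum fun i => ?_
        have h0 : 0 < i.1.2 := (hut i.2).1
        have h3 := (hut i.2).2.2
        calc _ ≤ K * μ (ball i.1.1 (2 * (2 * i.1.2))) := hK _ _ (by positivity)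
          _ ≤ K * (K * μ (ball i.1.1 (2 * i.1.2))) := by gcongr; exact hK _ _ (by positivity)
          _ ≤ K * (K * (K * μ (ball i.1.1 i.1.2))) := by gcongr; exact hK _ _ (by positivity)
          _ ≤ K * (K * (K * (c * ν (ball i.1.1 i.1.2)))) := by gcongr
          _ = _ := by ring
      _ = K ^ 3 * c * ∑' i : u, ν (ball i.1.1 i.1.2) := ENNReal.tsum_mul_left
      _ = K ^ 3 * c * ν (⋃ i ∈ u, ball i.1 i.2) := by
        rw [measure_biUnion hcount hdis (fun i _ => measurableSet_ball)]
      _ ≤ _ := by gcongr; exact subset_univ _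
  have hmono : Monotone (fun R : ℕ => {x | ∃ a, ∃ r : ℝ, r ≤ R ∧ x ∈ ball a r ∧
      μ (ball a r) ≤ c * ν (ball a r)}) := by
    rintro R S hRS x ⟨a, r, hr, h⟩
    exact ⟨a, r, hr.trans (by exact_mod_cast hRS), h⟩
  calc μ E ≤ μ (⋃ R : ℕ, {x | ∃ a, ∃ r : ℝ, r ≤ R ∧ x ∈ ball a r ∧
      μ (ball a r) ≤ c * ν (ball a r)}) := by
        refine measure_mono fun x hx => ?_
        obtain ⟨a, r, h1, h2⟩ := hE x hx
        obtain ⟨R, hR⟩ := exists_nat_ge r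
        exact mem_iUnion.2 ⟨R, a, r, hR, h1, h2⟩
    _ ≤ _ := by
      rw [hmono.measure_iUnion]
      exact iSup_le key

lemma layer_fin (p : ℝ) (hp : 0 < p) (y : ℝ) (hy : 0 ≤ y) :
    ∫⁻ t in Ioi (0 : ℝ), {t : ℝ | ENNReal.ofReal t < ENNReal.ofReal y}.indicator
      (fun t => ENNReal.ofReal (t ^ (p - 1))) t = ENNReal.ofReal (1 / p) * ENNReal.ofReal y ^ p := by
  have hm : MeasurableSet {t : ℝ | ENNReal.ofReal t < ENNReal.ofReal y} :=
    measurableSet_lt (by fun_prop) (by fun_prop)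
  rw [setLIntegral_indicator hm]
  have : {t : ℝ | ENNReal.ofReal t < ENNReal.ofReal y} ∩ Ioi 0 = Ioo 0 y := by
    ext t
    simp only [mem_inter_iff, mem_ofPred_eq, mem_Ioi, mem_Ioo]
    constructor
    · rintro ⟨h1, h2⟩
      exact ⟨h2, (ENNReal.ofReal_lt_ofReal_iff'.1 h1).1⟩
    · rintro ⟨h1, h2⟩
      exact ⟨ENNReal.ofReal_lt_ofReal_iff'.2 ⟨h2, h1.trans h2⟩, h1⟩
  rw [this, restrict_Ioo_eq_restrict_Ioc, ← ofReal_integral_eq_lintegral_ofReal,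
    ← intervalIntegral.integral_of_le hy, integral_rpow (Or.inl (by linarith)),
    ENNReal.ofReal_rpow_of_nonneg hy hp.le, ← ENNReal.ofReal_mul (by positivity)]
  · congr 1
    rw [sub_add_cancel, Real.zero_rpow hp.ne']
    ring
  · have := intervalIntegral.intervalIntegrable_rpow' (a := 0) (b := y) (r := p - 1) (by linarith)
    rwa [intervalIntegrable_iff_integrableOn_Ioc_of_le hy] at this
  · filter_upwards [ae_restrict_mem measurableSet_Ioc] with t ht
    exact Real.rpow_nonneg ht.1.le _

lemma layer (p : ℝ) (hp : 0 < p) (y : ℝ≥0∞) :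
    ∫⁻ t in Ioi (0 : ℝ), {t : ℝ | ENNReal.ofReal t < y}.indicator
      (fun t => ENNReal.ofReal (t ^ (p - 1))) t = ENNReal.ofReal (1 / p) * y ^ p := by
  rcases eq_or_ne y ⊤ with rfl | hy
  · have hpp : ENNReal.ofReal (1 / p) ≠ 0 := by simpa using hp
    rw [ENNReal.top_rpow_of_pos hp, ENNReal.mul_top hpp]
    refine ENNReal.eq_top_of_forall_nnreal_le fun r => ?_
    have h := layer_fin p hp ((p * r) ^ (1 / p)) (by positivity)
    have h2 : ENNReal.ofReal (1 / p) * ENNReal.ofReal ((p * r) ^ (1 / p)) ^ p = r := by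
      rw [ENNReal.ofReal_rpow_of_nonneg (by positivity) hp.le, ← Real.rpow_mul (by positivity),
        ← ENNReal.ofReal_mul (by positivity)]
      field_simp
      rw [Real.rpow_one, mul_div_cancel_left₀ _ hp.ne']
      simp
    rw [← h2, ← h]
    refine lintegral_mono fun t => ?_
    refine indicator_le_indicator_of_subset ?_ (fun _ => zero_le) t
    intro t _
    simp
  · rw [← ENNReal.ofReal_toReal hy]
    exact layer_fin p hp _ ENNReal.toReal_nonneg

lemma strong_uMax {X : Type*} [PseudoMetricSpace X] [SecondCountableTopology X] [MeasurableSpace X]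
    [OpensMeasurableSpace X] (μ : Measure X) [SFinite μ] (K : ℝ≥0∞)
    (hK : ∀ a r, 0 < r → μ (ball a (2 * r)) ≤ K * μ (ball a r))
    (hpos : ∀ a r, 0 < r → μ (ball a r) ≠ 0) (hfin : ∀ a r, μ (ball a r) ≠ ⊤)
    (hKt : K ≠ ⊤) (p : ℝ) (hp : 1 < p) :
    ∃ D : ℝ≥0∞, D ≠ ⊤ ∧ ∀ g : X → ℝ≥0∞, Measurable g →
      ∫⁻ x, uMax μ g x ^ p ∂μ ≤ D * ∫⁻ x, g x ^ p ∂μ := by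
  have hp0 : 0 < p := by linarith
  have hp1 : 0 < p - 1 := by linarith
  refine ⟨ENNReal.ofReal p * (K ^ 3 * 2 * (ENNReal.ofReal (1 / (p - 1)) * 2 ^ (p - 1))), ?_, ?_⟩
  · have : (2 : ℝ≥0∞) ^ (p - 1) ≠ ⊤ := ENNReal.rpow_ne_top_of_nonneg hp1.le (by simp)
    finiteness
  intro g hg
  have hMm := measurable_uMax μ g
  have hone : ENNReal.ofReal p * ENNReal.ofReal (1 / p) = 1 := by
    rw [← ENNReal.ofReal_mul hp0.le]; field_simp; simp
  -- weak type estimate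
  have weak : ∀ t : ℝ, 0 < t → μ {x | ENNReal.ofReal t < uMax μ g x} ≤
      K ^ 3 * (2 * ENNReal.ofReal t⁻¹) *
        ∫⁻ x, {x | ENNReal.ofReal t < 2 * g x}.indicator g x ∂μ := by
    intro t ht
    have hms : MeasurableSet {x | ENNReal.ofReal t < 2 * g x} :=
      measurableSet_lt (by fun_prop) (by fun_prop)
    have := vitali_bound μ (μ.withDensity ({x | ENNReal.ofReal t < 2 * g x}.indicator g)) K hK
      {x | ENNReal.ofReal t < uMax μ g x} (2 * ENNReal.ofReal t⁻¹) ?_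
    · rwa [withDensity_apply _ MeasurableSet.univ, Measure.restrict_univ] at this
    intro x hx
    obtain ⟨a, r, hxa, hlt⟩ := (lt_uMax_iff μ g).1 hx
    refine ⟨a, r, hxa, ?_⟩
    rw [withDensity_apply _ measurableSet_ball]
    have hr : 0 < r := pos_of_mem_ball hxa
    have hB0 := hpos a r hr
    have hBt := hfin a r
    have h1 : ENNReal.ofReal t * μ (ball a r) ≤ ∫⁻ y in ball a r, g y ∂μ := by
      have := hlt.le
      rwa [mul_comm, ← div_eq_mul_inv, ENNReal.le_div_iff_mul_le (Or.inl hB0) (Or.inl hBt)] at this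
    have h2 : ∫⁻ y in ball a r, g y ∂μ ≤
        (∫⁻ y in ball a r, {x | ENNReal.ofReal t < 2 * g x}.indicator g y ∂μ) +
          ENNReal.ofReal (t / 2) * μ (ball a r) := by
      rw [← setLIntegral_const, ← lintegral_add_right _ measurable_const]
      refine lintegral_mono fun y => ?_
      by_cases hy : y ∈ {x | ENNReal.ofReal t < 2 * g x}
      · simp only [indicator_of_mem hy]; exact le_self_add
      · simp only [indicator_of_notMem hy, zero_add]
        have : 2 * g y ≤ ENNReal.ofReal t := not_lt.1 hy
        have h3 : ENNReal.ofReal t = 2 * ENNReal.ofReal (t / 2) := by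
          rw [show (2 : ℝ≥0∞) = ENNReal.ofReal 2 by simp, ← ENNReal.ofReal_mul (by norm_num)]
          congr 1; ring
        rw [h3] at this
        exact (ENNReal.mul_le_mul_iff_right (by simp) (by simp)).1 this
    have h4 : ENNReal.ofReal t = ENNReal.ofReal (t / 2) + ENNReal.ofReal (t / 2) := by
      rw [← ENNReal.ofReal_add (by positivity) (by positivity)]; congr 1; ring
    have h5 := h1.trans h2
    rw [h4, add_mul] at h5
    have h6 := (ENNReal.add_le_add_iff_right
      (ENNReal.mul_ne_top ENNReal.ofReal_ne_top hBt)).1 h5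
    rw [← h4] at h6
    calc μ (ball a r) = (2 * ENNReal.ofReal t⁻¹) * (ENNReal.ofReal (t / 2) * μ (ball a r)) := by
          rw [← mul_assoc, show (2 : ℝ≥0∞) = ENNReal.ofReal 2 by simp,
            ← ENNReal.ofReal_mul (by norm_num), ← ENNReal.ofReal_mul (by positivity)]
          field_simp
          simp
      _ ≤ _ := by gcongr
  have hmeas1 : Measurable (Function.uncurry fun (x : X) (t : ℝ) =>
      {t : ℝ | ENNReal.ofReal t < uMax μ g x}.indicator
        (fun t => ENNReal.ofReal (t ^ (p - 1))) t) := by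
    have : (Function.uncurry fun (x : X) (t : ℝ) =>
      {t : ℝ | ENNReal.ofReal t < uMax μ g x}.indicator
        (fun t => ENNReal.ofReal (t ^ (p - 1))) t) =
      {z : X × ℝ | ENNReal.ofReal z.2 < uMax μ g z.1}.indicator
        (fun z => ENNReal.ofReal (z.2 ^ (p - 1))) := rfl
    rw [this]
    exact Measurable.indicator (by fun_prop)
      (measurableSet_lt (by fun_prop) (hMm.comp measurable_fst))
  have hmeas2 : Measurable (Function.uncurry fun (t : ℝ) (x : X) =>
      g x * {t : ℝ | ENNReal.ofReal t < 2 * g x}.indicator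
        (fun t => ENNReal.ofReal (t ^ ((p - 1) - 1))) t) := by
    have : (Function.uncurry fun (t : ℝ) (x : X) =>
      g x * {t : ℝ | ENNReal.ofReal t < 2 * g x}.indicator
        (fun t => ENNReal.ofReal (t ^ ((p - 1) - 1))) t) =
      fun z : ℝ × X => g z.2 * {z : ℝ × X | ENNReal.ofReal z.1 < 2 * g z.2}.indicator
        (fun z => ENNReal.ofReal (z.1 ^ ((p - 1) - 1))) z := rfl
    rw [this]
    exact (hg.comp measurable_snd).mul (Measurable.indicator (by fun_prop)
      (measurableSet_lt (by fun_prop) ((hg.comp measurable_snd).const_mul 2)))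
  calc ∫⁻ x, uMax μ g x ^ p ∂μ
      = ENNReal.ofReal p * ∫⁻ x, (ENNReal.ofReal (1 / p) * uMax μ g x ^ p) ∂μ := by
        rw [lintegral_const_mul' _ _ ENNReal.ofReal_ne_top, ← mul_assoc, hone, one_mul]
    _ = ENNReal.ofReal p * ∫⁻ x, (∫⁻ t in Ioi (0 : ℝ),
        {t : ℝ | ENNReal.ofReal t < uMax μ g x}.indicator
          (fun t => ENNReal.ofReal (t ^ (p - 1))) t) ∂μ := by
        congr 1
        exact lintegral_congr fun x => (layer p hp0 _).symm
    _ = ENNReal.ofReal p * ∫⁻ t in Ioi (0 : ℝ), (∫⁻ x,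
        {t : ℝ | ENNReal.ofReal t < uMax μ g x}.indicator
          (fun t => ENNReal.ofReal (t ^ (p - 1))) t ∂μ) := by
        rw [lintegral_lintegral_swap hmeas1.aemeasurable]
    _ ≤ ENNReal.ofReal p * ∫⁻ t in Ioi (0 : ℝ), K ^ 3 * 2 * (∫⁻ x,
        g x * {t : ℝ | ENNReal.ofReal t < 2 * g x}.indicator
          (fun t => ENNReal.ofReal (t ^ ((p - 1) - 1))) t ∂μ) := by
        gcongr ENNReal.ofReal p * ?_
        refine setLIntegral_mono' measurableSet_Ioi fun t ht => ?_
        have ht0 : 0 < t := ht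
        have e1 : ∫⁻ x, {t : ℝ | ENNReal.ofReal t < uMax μ g x}.indicator
          (fun t => ENNReal.ofReal (t ^ (p - 1))) t ∂μ =
          ENNReal.ofReal (t ^ (p - 1)) * μ {x | ENNReal.ofReal t < uMax μ g x} := by
          rw [← lintegral_indicator_const (measurableSet_lt (by fun_prop) hMm)]
          rfl
        have e2 : ∫⁻ x, g x * {t : ℝ | ENNReal.ofReal t < 2 * g x}.indicator
          (fun t => ENNReal.ofReal (t ^ ((p - 1) - 1))) t ∂μ =
          ENNReal.ofReal (t ^ (p - 1)) * ENNReal.ofReal t⁻¹ *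
            ∫⁻ x, {x | ENNReal.ofReal t < 2 * g x}.indicator g x ∂μ := by
          rw [← lintegral_const_mul' _ _ (by finiteness)]
          refine lintegral_congr fun x => ?_
          have : ENNReal.ofReal (t ^ (p - 1)) * ENNReal.ofReal t⁻¹ =
              ENNReal.ofReal (t ^ ((p - 1) - 1)) := by
            rw [Real.rpow_sub_one ht0.ne' (p - 1), ENNReal.ofReal_mul (by positivity)|>.symm]
            rfl
          rw [this]
          by_cases hx : ENNReal.ofReal t < 2 * g x
          · simp [indicator, mul_comm]
          · simp [indicator, hx]
        rw [e1, e2]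
        refine (mul_le_mul' le_rfl (weak t ht0)).trans_eq ?_
        ring
    _ = ENNReal.ofReal p * (K ^ 3 * 2 * ∫⁻ x, (∫⁻ t in Ioi (0 : ℝ),
        g x * {t : ℝ | ENNReal.ofReal t < 2 * g x}.indicator
          (fun t => ENNReal.ofReal (t ^ ((p - 1) - 1))) t) ∂μ) := by
        rw [lintegral_const_mul' _ _ (by finiteness), lintegral_lintegral_swap hmeas2.aemeasurable]
    _ = ENNReal.ofReal p * (K ^ 3 * 2 * ∫⁻ x, (ENNReal.ofReal (1 / (p - 1)) * 2 ^ (p - 1)) *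
          g x ^ p ∂μ) := by
        congr 2
        refine lintegral_congr fun x => ?_
        rw [lintegral_const_mul, layer (p - 1) hp1]
        · rw [ENNReal.mul_rpow_of_nonneg _ _ hp1.le]
          have : g x ^ p = g x * g x ^ (p - 1) := by
            conv_lhs => rw [show p = 1 + (p - 1) by ring]
            rw [ENNReal.rpow_add_of_nonneg _ _ (by norm_num) hp1.le, ENNReal.rpow_one]
          rw [this]; ring
        · exact Measurable.indicator (by fun_prop)
            (measurableSet_lt (by fun_prop) (by fun_prop))
    _ = _ := by
        rw [lintegral_const_mul _ (by fun_prop)]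
        ring

lemma vol_double {n : ℕ} (a : EuclideanSpace ℝ (Fin n)) (r : ℝ) :
    volume (ball a (2 * r)) = 2 ^ n * volume (ball a r) := by
  rw [Measure.addHaar_ball_mul_of_pos _ _ (by norm_num : (0 : ℝ) < 2), Measure.addHaar_ball_center,
    Measure.addHaar_ball_center volume a r]
  simp

lemma doubling_of {n : ℕ} (μ ν : Measure (EuclideanSpace ℝ (Fin n))) (a b d : ℝ) (ha : 0 < a)
    (hb : 0 < b) (hd : 0 < d) (C : ℝ≥0∞) (hC : C ≠ ⊤)
    (h1 : ∀ x r, 0 < r → volume (ball x r) ^ d ≤ μ (ball x r) ^ a * ν (ball x r) ^ b)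
    (h2 : ∀ x r, 0 < r → μ (ball x r) ^ a * ν (ball x r) ^ b ≤ C * volume (ball x r) ^ d)
    (hν0 : ∀ x r, 0 < r → ν (ball x r) ≠ 0) (hνt : ∀ x r, ν (ball x r) ≠ ⊤) :
    ∃ K : ℝ≥0∞, K ≠ ⊤ ∧ ∀ x r, 0 < r → μ (ball x (2 * r)) ≤ K * μ (ball x r) := by
  refine ⟨(C * (2 ^ n) ^ d) ^ a⁻¹, ?_, fun x r hr => ?_⟩
  · refine ENNReal.rpow_ne_top_of_nonneg (by positivity) (ENNReal.mul_ne_top hC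
      (ENNReal.rpow_ne_top_of_nonneg hd.le (by finiteness)))
  have h3 : μ (ball x (2 * r)) ^ a * ν (ball x (2 * r)) ^ b ≤
      (C * (2 ^ n) ^ d * μ (ball x r) ^ a) * ν (ball x (2 * r)) ^ b := by
    calc _ ≤ C * volume (ball x (2 * r)) ^ d := h2 _ _ (by positivity)
      _ = C * (2 ^ n) ^ d * volume (ball x r) ^ d := by
        rw [vol_double, ENNReal.mul_rpow_of_nonneg _ _ hd.le, mul_assoc]
      _ ≤ C * (2 ^ n) ^ d * (μ (ball x r) ^ a * ν (ball x r) ^ b) := by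
        gcongr; exact h1 _ _ hr
      _ ≤ C * (2 ^ n) ^ d * (μ (ball x r) ^ a * ν (ball x (2 * r)) ^ b) := by
        gcongr; linarith
      _ = _ := by ring
  have h4 : μ (ball x (2 * r)) ^ a ≤ C * (2 ^ n) ^ d * μ (ball x r) ^ a := by
    refine (ENNReal.mul_le_mul_iff_left ?_ ?_).1 h3
    · exact (ENNReal.rpow_pos (pos_iff_ne_zero.2 (hν0 _ _ (by positivity))) (hνt _ _)).ne'
    · exact ENNReal.rpow_ne_top_of_nonneg hb.le (hνt _ _)
  have h5 := ENNReal.rpow_le_rpow h4 (inv_nonneg.2 ha.le)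
  rwa [ENNReal.rpow_rpow_inv ha.ne', ENNReal.mul_rpow_of_nonneg _ _ (inv_nonneg.2 ha.le),
    ENNReal.rpow_rpow_inv ha.ne'] at h5

lemma holder_set {X : Type*} [MeasurableSpace X] (μ : Measure X) (ω f : X → ℝ≥0∞)
    (hω : Measurable ω) (hf : Measurable f) (h0 : ∀ᵐ x ∂μ, ω x ≠ 0 ∧ ω x ≠ ⊤) (p p' : ℝ)
    (hp : 1 < p) (hp' : 1 / p + 1 / p' = 1) :
    ∫⁻ x, f x ∂μ ≤ (∫⁻ x, f x ^ p * ω x ^ p ∂μ) ^ (1 / p) * (∫⁻ x, ω x ^ (-p') ∂μ) ^ (1 / p') := by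
  have hc : p.HolderConjugate p' := Real.holderConjugate_iff.2 ⟨hp, by simpa using hp'⟩
  have := ENNReal.lintegral_mul_le_Lp_mul_Lq μ hc (f := fun x => f x * ω x)
    (g := fun x => (ω x)⁻¹) (by fun_prop) (by fun_prop)
  refine le_trans (le_of_eq ?_) (this.trans (le_of_eq ?_))
  · refine lintegral_congr_ae ?_
    filter_upwards [h0] with x hx
    simp only [Pi.mul_apply]
    rw [mul_assoc, ENNReal.mul_inv_cancel hx.1 hx.2, mul_one]
  · congr 2
    · exact lintegral_congr fun x => by rw [ENNReal.mul_rpow_of_nonneg _ _ hc.nonneg]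
    · exact lintegral_congr fun x => by rw [ENNReal.inv_rpow, ENNReal.rpow_neg]

lemma dens_ball_pos {n : ℕ} (ω : EuclideanSpace ℝ (Fin n) → ℝ≥0∞) (hω : Measurable ω)
    (h0 : ∀ᵐ x, ω x ≠ 0 ∧ ω x ≠ ⊤) (s : ℝ) (a : EuclideanSpace ℝ (Fin n)) (r : ℝ) (hr : 0 < r) :
    ∫⁻ x in ball a r, ω x ^ s ≠ 0 := by
  intro h
  rw [lintegral_eq_zero_iff (by fun_prop)] at h
  have h2 : ∀ᵐ x ∂(volume.restrict (ball a r)), False := by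
    filter_upwards [h, ae_restrict_of_ae h0] with x hx hx0
    exact (ENNReal.rpow_pos (pos_iff_ne_zero.2 hx0.1) hx0.2).ne' hx
  rw [Filter.eventually_false_iff_eq_bot, ae_eq_bot, Measure.restrict_eq_zero] at h2
  exact (measure_ball_pos volume a hr).ne' h2

/-- ball-wise consequences of the `A_{p,q}` condition -/
lemma Apq_facts {n : ℕ} (ω : EuclideanSpace ℝ (Fin n) → ℝ≥0∞) (hω : Measurable ω)
    (h0 : ∀ᵐ x, ω x ≠ 0 ∧ ω x ≠ ⊤) (q p' : ℝ) (hq : 0 < q) (hp' : 0 < p') (C : ℝ≥0∞) (hC : C ≠ ⊤)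
    (hA : ∀ a r, 0 < r → (∫⁻ x in ball a r, ω x ^ q) ^ (1 / q) *
      (∫⁻ x in ball a r, ω x ^ (-p')) ^ (1 / p') ≤ C * volume (ball a r) ^ (1 / q + 1 / p')) :
    (∀ a r, ∫⁻ x in ball a r, ω x ^ q ≠ ⊤) ∧ (∀ a r, ∫⁻ x in ball a r, ω x ^ (-p') ≠ ⊤) ∧
    (∃ K : ℝ≥0∞, K ≠ ⊤ ∧ ∀ a r, 0 < r →
      ∫⁻ x in ball a (2 * r), ω x ^ q ≤ K * ∫⁻ x in ball a r, ω x ^ q) ∧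
    (∃ K : ℝ≥0∞, K ≠ ⊤ ∧ ∀ a r, 0 < r →
      ∫⁻ x in ball a (2 * r), ω x ^ (-p') ≤ K * ∫⁻ x in ball a r, ω x ^ (-p')) := by
  have hd : 0 < 1 / q + 1 / p' := by positivity
  have hU0 := dens_ball_pos ω hω h0 q
  have hS0 := dens_ball_pos ω hω h0 (-p')
  have hfin : ∀ a r, 0 < r → (∫⁻ x in ball a r, ω x ^ q ≠ ⊤) ∧
      (∫⁻ x in ball a r, ω x ^ (-p') ≠ ⊤) := by
    intro a r hr
    have hlt := (hA a r hr).trans_lt (ENNReal.mul_lt_top hC.lt_top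
      (ENNReal.rpow_lt_top_of_nonneg hd.le measure_ball_lt_top.ne))
    constructor
    · intro h
      rw [h, ENNReal.top_rpow_of_pos (by positivity), ENNReal.top_mul] at hlt
      · exact lt_irrefl _ hlt
      · rw [Ne, ENNReal.rpow_eq_zero_iff_of_pos (by positivity)]
        exact hS0 a r hr
    · intro h
      rw [h, ENNReal.top_rpow_of_pos (by positivity), ENNReal.mul_top] at hlt
      · exact lt_irrefl _ hlt
      · rw [Ne, ENNReal.rpow_eq_zero_iff_of_pos (by positivity)]
        exact hU0 a r hr
  have hUt : ∀ a r, ∫⁻ x in ball a r, ω x ^ q ≠ ⊤ := by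
    intro a r
    rcases le_or_gt r 0 with hr | hr
    · simp [ball_eq_empty.2 hr]
    · exact (hfin a r hr).1
  have hSt : ∀ a r, ∫⁻ x in ball a r, ω x ^ (-p') ≠ ⊤ := by
    intro a r
    rcases le_or_gt r 0 with hr | hr
    · simp [ball_eq_empty.2 hr]
    · exact (hfin a r hr).2
  have hlow : ∀ a r, 0 < r → volume (ball a r) ^ (1 / q + 1 / p') ≤
      (∫⁻ x in ball a r, ω x ^ q) ^ (1 / q) * (∫⁻ x in ball a r, ω x ^ (-p')) ^ (1 / p') := by
    intro a r hr
    set d := 1 / q + 1 / p' with hdd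
    have := ENNReal.lintegral_mul_norm_pow_le (μ := volume.restrict (ball a r))
      (f := fun x => ω x ^ q) (g := fun x => ω x ^ (-p')) (p := 1 / q / d) (q := 1 / p' / d)
      (by fun_prop) (by fun_prop) (by positivity) (by positivity)
      (by rw [← add_div, ← hdd, div_self hd.ne'])
    have h1 : ∫⁻ x in ball a r, (ω x ^ q) ^ (1 / q / d) * (ω x ^ (-p')) ^ (1 / p' / d) =
        volume (ball a r) := by
      rw [← setLIntegral_one]
      refine lintegral_congr_ae ?_
      filter_upwards [ae_restrict_of_ae h0] with x hx
      rw [← ENNReal.rpow_mul, ← ENNReal.rpow_mul, ← ENNReal.rpow_add _ _ hx.1 hx.2]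
      have : q * (1 / q / d) + -p' * (1 / p' / d) = 0 := by field_simp; ring
      rw [this, ENNReal.rpow_zero]
    rw [h1] at this
    have h2 := ENNReal.rpow_le_rpow this hd.le
    rwa [ENNReal.mul_rpow_of_nonneg _ _ hd.le, ← ENNReal.rpow_mul, ← ENNReal.rpow_mul,
      div_mul_cancel₀ _ hd.ne', div_mul_cancel₀ _ hd.ne'] at h2
  have e1 : ∀ a r, (volume.withDensity (fun x => ω x ^ q)) (ball a r) =
      ∫⁻ x in ball a r, ω x ^ q := fun a r => withDensity_apply _ measurableSet_ball
  have e2 : ∀ a r, (volume.withDensity (fun x => ω x ^ (-p'))) (ball a r) =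
      ∫⁻ x in ball a r, ω x ^ (-p') := fun a r => withDensity_apply _ measurableSet_ball
  refine ⟨hUt, hSt, ?_, ?_⟩
  · have := doubling_of (volume.withDensity (fun x => ω x ^ q))
      (volume.withDensity (fun x => ω x ^ (-p'))) (1 / q) (1 / p') (1 / q + 1 / p')
      (by positivity) (by positivity) hd C hC
    simp only [e1, e2] at this
    exact this hlow hA hS0 hSt
  · have := doubling_of (volume.withDensity (fun x => ω x ^ (-p')))
      (volume.withDensity (fun x => ω x ^ q)) (1 / p') (1 / q) (1 / q + 1 / p')
      (by positivity) (by positivity) hd C hC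
    simp only [e1, e2] at this
    refine this (fun a r hr => ?_) (fun a r hr => ?_) hU0 hUt
    · rw [mul_comm]; exact hlow a r hr
    · rw [mul_comm]; exact hA a r hr

/-- numerical core -/
lemma mw_num (p q p' τ β d : ℝ) (hp : 1 < p) (hpq : p < q) (hp'0 : 0 < p')
    (hp' : 1 / p + 1 / p' = 1) (hτ : τ = 1 + p' / q) (hβ : β = p / τ) (hd : d = 1 / q + 1 / p')
    (u s v A N C : ℝ≥0∞) (hu : u ≠ 0) (hut : u ≠ ⊤) (hs : s ≠ 0) (hst : s ≠ ⊤)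
    (hv : v ≠ 0) (hvt : v ≠ ⊤)
    (hA : A ≤ N * s ^ (1 / p')) (hC : u ^ (1 / q) * s ^ (1 / p') ≤ C * v ^ d) :
    (v ^ (-d) * A) ^ q ≤ C ^ (q + p') * N ^ (q - p) * (u⁻¹ * (v * (s⁻¹ * A) ^ β)) ^ τ := by
  have hq0 : 0 < q := by linarith
  have hτ0 : 0 < τ := by rw [hτ]; positivity
  have hp0 : 0 < p := by linarith
  have hqp : 0 ≤ q - p := by linarith
  have hβ0 : 0 < β := by rw [hβ]; positivity
  have r1 : (u⁻¹ * (v * (s⁻¹ * A) ^ β)) ^ τ = u ^ (-τ) * v ^ τ * (s ^ (-p) * A ^ p) := by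
    rw [ENNReal.mul_rpow_of_nonneg _ _ hτ0.le, ENNReal.mul_rpow_of_nonneg _ _ hτ0.le,
      ← ENNReal.rpow_mul, hβ, div_mul_cancel₀ _ hτ0.ne', ENNReal.mul_rpow_of_nonneg _ _ hp0.le,
      ENNReal.inv_rpow, ENNReal.inv_rpow, ENNReal.rpow_neg, ENNReal.rpow_neg, mul_assoc]
  have r2 : (v ^ (-d) * A) ^ q = v ^ (-(d * q)) * (A ^ (q - p) * A ^ p) := by
    rw [ENNReal.mul_rpow_of_nonneg _ _ hq0.le, ← ENNReal.rpow_mul,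
      ← ENNReal.rpow_add_of_nonneg _ _ hqp hp0.le, sub_add_cancel, neg_mul]
  have r3 : A ^ (q - p) ≤ N ^ (q - p) * s ^ ((q - p) / p') := by
    refine (ENNReal.rpow_le_rpow hA hqp).trans_eq ?_
    rw [ENNReal.mul_rpow_of_nonneg _ _ hqp, ← ENNReal.rpow_mul]
    congr 2; ring
  have r4 : u ^ τ * s ^ ((q - p) / p' + p) ≤ C ^ (q + p') * v ^ (d * q + τ) := by
    have := ENNReal.rpow_le_rpow hC (by positivity : 0 ≤ q + p')
    rw [ENNReal.mul_rpow_of_nonneg _ _ (by positivity), ENNReal.mul_rpow_of_nonneg _ _ (by positivity),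
      ← ENNReal.rpow_mul, ← ENNReal.rpow_mul, ← ENNReal.rpow_mul] at this
    have e1 : 1 / q * (q + p') = τ := by rw [hτ]; field_simp
    have e2 : 1 / p' * (q + p') = (q - p) / p' + p := by
      field_simp at hp' ⊢
      linarith
    have e3 : d * (q + p') = d * q + τ := by rw [hd, hτ]; field_simp; ring
    rwa [e1, e2, e3] at this
  have r5 : v ^ (-(d * q)) * s ^ ((q - p) / p') ≤ C ^ (q + p') * (u ^ (-τ) * v ^ τ * s ^ (-p)) := by
    calc _ = (u ^ τ * s ^ ((q - p) / p' + p)) * (v ^ (-(d * q)) * u ^ (-τ) * s ^ (-p)) := by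
          have a1 : u ^ τ * u ^ (-τ) = 1 := by rw [← ENNReal.rpow_add _ _ hu hut]; simp
          have a2 : s ^ ((q - p) / p' + p) * s ^ (-p) = s ^ ((q - p) / p') := by
            rw [← ENNReal.rpow_add _ _ hs hst]; congr 1; ring
          rw [← a2]
          calc _ = (1 : ℝ≥0∞) * (v ^ (-(d * q)) * (s ^ ((q - p) / p' + p) * s ^ (-p))) := by ring
            _ = _ := by rw [← a1]; ring
      _ ≤ (C ^ (q + p') * v ^ (d * q + τ)) * (v ^ (-(d * q)) * u ^ (-τ) * s ^ (-p)) := by gcongr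
      _ = _ := by
          have a3 : v ^ (d * q + τ) * v ^ (-(d * q)) = v ^ τ := by
            rw [← ENNReal.rpow_add _ _ hv hvt]; congr 1; ring
          rw [← a3]; ring
  rw [r1, r2]
  calc _ ≤ v ^ (-(d * q)) * (N ^ (q - p) * s ^ ((q - p) / p') * A ^ p) := by gcongr
    _ = (v ^ (-(d * q)) * s ^ ((q - p) / p')) * (N ^ (q - p) * A ^ p) := by ring
    _ ≤ (C ^ (q + p') * (u ^ (-τ) * v ^ τ * s ^ (-p))) * (N ^ (q - p) * A ^ p) := by gcongr
    _ = _ := by ring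

/-- Muckenhoupt–Wheeden for the fractional maximal operator. -/
lemma muck_wheeden {n : ℕ} (ω : EuclideanSpace ℝ (Fin n) → ℝ≥0∞) (hω : Measurable ω)
    (h0 : ∀ᵐ x, ω x ≠ 0 ∧ ω x ≠ ⊤) (p q p' : ℝ) (hp : 1 < p) (hpq : p < q) (hp'0 : 0 < p')
    (hp' : 1 / p + 1 / p' = 1) (C : ℝ≥0∞) (hC : C ≠ ⊤)
    (hA : ∀ a r, 0 < r → (∫⁻ x in ball a r, ω x ^ q) ^ (1 / q) *
      (∫⁻ x in ball a r, ω x ^ (-p')) ^ (1 / p') ≤ C * volume (ball a r) ^ (1 / q + 1 / p')) :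
    ∃ D : ℝ≥0∞, D ≠ ⊤ ∧ ∀ f : EuclideanSpace ℝ (Fin n) → ℝ≥0∞, Measurable f →
      ∫⁻ x, f x ^ p * ω x ^ p ≠ ⊤ →
      ∫⁻ x, (⨆ r : Ioi (0 : ℝ), volume (ball x r.1) ^ (-(1 / q + 1 / p')) *
        ∫⁻ y in ball x r.1, f y) ^ q * ω x ^ q ≤ D * (∫⁻ x, f x ^ p * ω x ^ p) ^ (q / p) := by
  have hq0 : 0 < q := by linarith
  have hp0 : 0 < p := by linarith
  obtain ⟨hUt, hSt, ⟨K1, hK1, hK1'⟩, ⟨K2, hK2, hK2'⟩⟩ :=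
    Apq_facts ω hω h0 q p' hq0 hp'0 C hC hA
  have hU0 := dens_ball_pos ω hω h0 q
  have hS0 := dens_ball_pos ω hω h0 (-p')
  set μ := volume.withDensity (fun x => ω x ^ q) with hμ
  set ν := volume.withDensity (fun x => ω x ^ (-p')) with hν
  have e1 : ∀ a r, μ (ball a r) = ∫⁻ x in ball a r, ω x ^ q :=
    fun a r => withDensity_apply _ measurableSet_ball
  have e2 : ∀ a r, ν (ball a r) = ∫⁻ x in ball a r, ω x ^ (-p') :=
    fun a r => withDensity_apply _ measurableSet_ball
  simp only [← e1, ← e2] at hA hUt hSt hK1' hK2' hU0 hS0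
  set τ := 1 + p' / q with hτ
  have hτ1 : 1 < τ := by rw [hτ]; linarith [div_pos hp'0 hq0]
  have hτ0 : 0 < τ := by linarith
  set β := p / τ with hβ
  have hβ0 : 0 < β := by positivity
  set d := 1 / q + 1 / p' with hd
  obtain ⟨D1, hD1, hD1'⟩ := strong_uMax μ K1 hK1' hU0 hUt hK1 τ hτ1
  obtain ⟨D2, hD2, hD2'⟩ := strong_uMax ν K2 hK2' hS0 hSt hK2 p hp
  refine ⟨C ^ (q + p') * (D1 * D2), ?_, fun f hf hNt => ?_⟩
  · have : C ^ (q + p') ≠ ⊤ := ENNReal.rpow_ne_top_of_nonneg (by positivity) hC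
    finiteness
  set I := ∫⁻ x, f x ^ p * ω x ^ p with hI
  set N := I ^ (1 / p) with hN
  have hNtop : N ≠ ⊤ := ENNReal.rpow_ne_top_of_nonneg (by positivity) hNt
  let g : EuclideanSpace ℝ (Fin n) → ℝ≥0∞ := fun x => f x * ω x ^ p'
  have hg : Measurable g := by fun_prop
  have hG := measurable_uMax ν g
  let h : EuclideanSpace ℝ (Fin n) → ℝ≥0∞ := fun x => uMax ν g x ^ β * (ω x ^ q)⁻¹
  have hh : Measurable h := by
    have := hG.pow_const β
    fun_prop
  have hgν : ∀ s : Set (EuclideanSpace ℝ (Fin n)), MeasurableSet s →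
      ∫⁻ y in s, g y ∂ν = ∫⁻ y in s, f y := by
    intro s hs
    rw [hν, restrict_withDensity hs, lintegral_withDensity_eq_lintegral_mul _ (by fun_prop) hg]
    refine lintegral_congr_ae ?_
    filter_upwards [ae_restrict_of_ae h0] with x hx
    simp only [Pi.mul_apply, g]
    rw [mul_left_comm, ← ENNReal.rpow_add _ _ hx.1 hx.2]
    simp
  have hhμ : ∀ s : Set (EuclideanSpace ℝ (Fin n)), MeasurableSet s →
      ∫⁻ y in s, h y ∂μ = ∫⁻ y in s, uMax ν g y ^ β := by
    intro s hs
    rw [hμ, restrict_withDensity hs, lintegral_withDensity_eq_lintegral_mul _ (by fun_prop) hh]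
    refine lintegral_congr_ae ?_
    filter_upwards [ae_restrict_of_ae h0] with x hx
    simp only [Pi.mul_apply, h]
    rw [mul_left_comm, ENNReal.mul_inv_cancel, mul_one]
    · exact (ENNReal.rpow_pos (pos_iff_ne_zero.2 hx.1) hx.2).ne'
    · exact ENNReal.rpow_ne_top_of_ne_zero hx.1 hx.2
  have pt : ∀ x, (⨆ r : Ioi (0 : ℝ), volume (ball x r.1) ^ (-d) *
        ∫⁻ y in ball x r.1, f y) ^ q ≤ C ^ (q + p') * N ^ (q - p) * uMax μ h x ^ τ := by
    intro x
    rw [← ENNReal.le_rpow_inv_iff hq0]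
    refine iSup_le fun r => ?_
    obtain ⟨r, hr⟩ := r
    have hr : 0 < r := hr
    rw [ENNReal.le_rpow_inv_iff hq0]
    simp only
    have hAN : ∫⁻ y in ball x r, f y ≤ N * ν (ball x r) ^ (1 / p') := by
      rw [e2]
      refine (holder_set (volume.restrict (ball x r)) ω f hω hf (ae_restrict_of_ae h0) p p' hp
        hp').trans ?_
      exact mul_le_mul' (ENNReal.rpow_le_rpow
        (lintegral_mono' Measure.restrict_le_self le_rfl) (by positivity)) le_rfl
    refine (mw_num p q p' τ β d hp hpq hp'0 hp' hτ hβ hd (μ (ball x r)) (ν (ball x r))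
      (volume (ball x r)) (∫⁻ y in ball x r, f y) N C (hU0 _ _ hr) (hUt _ _) (hS0 _ _ hr) (hSt _ _)
      (measure_ball_pos volume x hr).ne' measure_ball_lt_top.ne hAN (hA x r hr)).trans ?_
    gcongr
    refine le_trans ?_ (le_uMax μ h (mem_ball_self hr : x ∈ ball x r))
    gcongr
    rw [hhμ _ measurableSet_ball]
    rw [mul_comm, ← setLIntegral_const]
    refine setLIntegral_mono' measurableSet_ball fun y hy => ?_
    gcongr
    rw [← hgν _ measurableSet_ball]
    exact le_uMax ν g hy
  calc _ ≤ ∫⁻ x, C ^ (q + p') * N ^ (q - p) * (uMax μ h x ^ τ * ω x ^ q) := by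
        refine lintegral_mono fun x => ?_
        rw [← mul_assoc]
        gcongr
        exact pt x
    _ = C ^ (q + p') * N ^ (q - p) * ∫⁻ x, uMax μ h x ^ τ ∂μ := by
        rw [lintegral_const_mul', hμ, lintegral_withDensity_eq_lintegral_mul _ (by fun_prop)
          ((measurable_uMax _ h).pow_const τ)]
        · congr 1
          exact lintegral_congr fun x => mul_comm _ _
        · have h1 : C ^ (q + p') ≠ ⊤ := ENNReal.rpow_ne_top_of_nonneg (by positivity) hC
          have h2 : N ^ (q - p) ≠ ⊤ := ENNReal.rpow_ne_top_of_nonneg (by linarith) hNtop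
          finiteness
    _ ≤ C ^ (q + p') * N ^ (q - p) * (D1 * ∫⁻ x, h x ^ τ ∂μ) := by
        gcongr
        exact hD1' h hh
    _ = C ^ (q + p') * N ^ (q - p) * (D1 * ∫⁻ x, uMax ν g x ^ p ∂ν) := by
        congr 2
        rw [hμ, lintegral_withDensity_eq_lintegral_mul _ (by fun_prop) (hh.pow_const τ), hν,
          lintegral_withDensity_eq_lintegral_mul _ (by fun_prop) (hG.pow_const p)]
        refine lintegral_congr_ae ?_
        filter_upwards [h0] with x hx
        simp only [Pi.mul_apply, h]
        rw [ENNReal.mul_rpow_of_nonneg _ _ hτ0.le, ← ENNReal.rpow_mul, hβ,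
          div_mul_cancel₀ _ hτ0.ne', ← ENNReal.rpow_neg, ← ENNReal.rpow_mul, mul_left_comm,
          ← ENNReal.rpow_add _ _ hx.1 hx.2, mul_comm]
        congr 2
        rw [hτ]; field_simp; ring
    _ ≤ C ^ (q + p') * N ^ (q - p) * (D1 * (D2 * ∫⁻ x, g x ^ p ∂ν)) := by
        gcongr
        exact hD2' g hg
    _ = C ^ (q + p') * N ^ (q - p) * (D1 * (D2 * I)) := by
        congr 3
        rw [hν, lintegral_withDensity_eq_lintegral_mul _ (by fun_prop) (hg.pow_const p)]
        refine lintegral_congr_ae ?_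
        filter_upwards [h0] with x hx
        simp only [Pi.mul_apply, g]
        rw [ENNReal.mul_rpow_of_nonneg _ _ hp0.le, ← ENNReal.rpow_mul, mul_left_comm,
          ← ENNReal.rpow_add _ _ hx.1 hx.2]
        congr 2
        field_simp at hp'
        linarith
    _ = _ := by
        have : N ^ (q - p) * I = I ^ (q / p) := by
          rw [hN, ← ENNReal.rpow_mul]
          conv_lhs => rw [← ENNReal.rpow_one I, ← ENNReal.rpow_mul, one_mul]
          rw [← ENNReal.rpow_add_of_nonneg _ _
            (mul_nonneg (by positivity) (by linarith)) (by norm_num)]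
          congr 1
          field_simp
          ring
        rw [← this]; ring

lemma inv_le_mul_inv_aux {X Y k : ℝ≥0∞} (h : X ≤ k * Y) (hX : X ≠ 0) (hXt : X ≠ ⊤) (hY : Y ≠ 0)
    (hYt : Y ≠ ⊤) : Y⁻¹ ≤ k * X⁻¹ := by
  calc Y⁻¹ = Y⁻¹ * (X * X⁻¹) := by rw [ENNReal.mul_inv_cancel hX hXt, mul_one]
    _ ≤ Y⁻¹ * ((k * Y) * X⁻¹) := by gcongr
    _ = (Y * Y⁻¹) * (k * X⁻¹) := by ring
    _ = _ := by rw [ENNReal.mul_inv_cancel hY hYt, one_mul]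

lemma local_est {n : ℕ} (ω : EuclideanSpace ℝ (Fin n) → ℝ≥0∞) (hω : Measurable ω)
    (h0 : ∀ᵐ x, ω x ≠ 0 ∧ ω x ≠ ⊤) (p q p' : ℝ) (hp : 1 < p) (hpq : p < q) (hp'0 : 0 < p')
    (hp' : 1 / p + 1 / p' = 1) (C : ℝ≥0∞) (hC : C ≠ ⊤)
    (hA : ∀ a r, 0 < r → (∫⁻ x in ball a r, ω x ^ q) ^ (1 / q) *
      (∫⁻ x in ball a r, ω x ^ (-p')) ^ (1 / p') ≤ C * volume (ball a r) ^ (1 / q + 1 / p')) :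
    ∃ D : ℝ≥0∞, D ≠ ⊤ ∧ ∀ F : EuclideanSpace ℝ (Fin n) → ℝ≥0∞, Measurable F →
      (∀ a r, 0 < r → ∫⁻ x in ball a r, F x ^ p * ω x ^ p ≠ ⊤) → ∀ a r, 0 < r →
      (∫⁻ x in ball a r, ω x ^ q) ^ (-(1 / q)) *
      (∫⁻ x in ball a r, (⨆ s : Ioi (0 : ℝ), volume (ball x s.1) ^ (-(1 / q + 1 / p')) *
        ∫⁻ y in ball x s.1, F y) ^ q * ω x ^ q) ^ (1 / q) ≤
      D * ∫⁻ t in Ioi r, (∫⁻ x in ball a t, F x ^ p * ω x ^ p) ^ (1 / p) *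
        (∫⁻ x in ball a t, ω x ^ q) ^ (-(1 / q)) * ENNReal.ofReal t⁻¹ := by
  have hq0 : 0 < q := by linarith
  have hp0 : 0 < p := by linarith
  obtain ⟨hUt, hSt, ⟨K, hK, hK'⟩, -⟩ := Apq_facts ω hω h0 q p' hq0 hp'0 C hC hA
  have hU0 := dens_ball_pos ω hω h0 q
  obtain ⟨D1, hD1, hMW⟩ := muck_wheeden ω hω h0 p q p' hp hpq hp'0 hp' C hC hA
  set d := 1 / q + 1 / p' with hd
  have hd0 : 0 < d := by positivity
  set k := K ^ (1 / q) with hk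
  have hkt : k ≠ ⊤ := ENNReal.rpow_ne_top_of_nonneg (by positivity) hK
  have hiq : 0 < 1 / q := by positivity
  refine ⟨D1 ^ (1 / q) * (k * (2 * k)) + C * (2 ^ n) ^ d * (2 * k), ?_, ?_⟩
  · have h1 : D1 ^ (1 / q) ≠ ⊤ := ENNReal.rpow_ne_top_of_nonneg (by positivity) hD1
    have h2 : ((2 : ℝ≥0∞) ^ n) ^ d ≠ ⊤ := ENNReal.rpow_ne_top_of_nonneg hd0.le (by finiteness)
    finiteness
  intro F hF hFt a r hr
  set V : ℝ → ℝ≥0∞ := fun t => ∫⁻ x in ball a t, ω x ^ q with hV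
  set Q : ℝ → ℝ≥0∞ := fun t => (∫⁻ x in ball a t, F x ^ p * ω x ^ p) ^ (1 / p) with hQ
  set J := ∫⁻ t in Ioi r, Q t * V t ^ (-(1 / q)) * ENNReal.ofReal t⁻¹ with hJ
  have hV0 : ∀ t, 0 < t → V t ≠ 0 := fun t ht => hU0 a t ht
  have hVt : ∀ t, V t ≠ ⊤ := fun t => hUt a t
  have hP0 : ∀ t, 0 < t → V t ^ (1 / q) ≠ 0 := fun t ht =>
    (ENNReal.rpow_pos (pos_iff_ne_zero.2 (hV0 t ht)) (hVt t)).ne'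
  have hPt : ∀ t, V t ^ (1 / q) ≠ ⊤ := fun t => ENNReal.rpow_ne_top_of_nonneg hiq.le (hVt t)
  have hdoub : ∀ t, 0 < t → V t ^ (-(1 / q)) ≤ k * V (2 * t) ^ (-(1 / q)) := by
    intro t ht
    rw [ENNReal.rpow_neg, ENNReal.rpow_neg]
    refine inv_le_mul_inv_aux ?_ (hP0 _ (by positivity)) (hPt _) (hP0 _ ht) (hPt _)
    rw [hk, ← ENNReal.mul_rpow_of_nonneg _ _ hiq.le]
    exact ENNReal.rpow_le_rpow (hK' a t ht) hiq.le
  have hVmono : ∀ s t, s ≤ t → V s ≤ V t := fun s t hst =>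
    lintegral_mono_set (ball_subset_ball hst)
  have hQmono : ∀ s t, s ≤ t → Q s ≤ Q t := fun s t hst =>
    ENNReal.rpow_le_rpow (lintegral_mono_set (ball_subset_ball hst)) (by positivity)
  have key : ∀ s, r ≤ s → Q (2 * s) * V (2 * s) ^ (-(1 / q)) ≤ 2 * k * J := by
    intro s hs
    have hs0 : 0 < s := hr.trans_le hs
    have h1 : Q (2 * s) * V (2 * (2 * s)) ^ (-(1 / q)) ≤ 2 * J := by
      calc Q (2 * s) * V (2 * (2 * s)) ^ (-(1 / q))
          = 2 * (Q (2 * s) * V (2 * (2 * s)) ^ (-(1 / q)) * ENNReal.ofReal (2 * (2 * s))⁻¹ *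
              volume (Ioc (2 * s) (2 * (2 * s)))) := by
            rw [Real.volume_Ioc, mul_assoc (Q (2 * s) * V (2 * (2 * s)) ^ (-(1 / q))),
              ← ENNReal.ofReal_mul (by positivity)]
            have : (2 * (2 * s))⁻¹ * (2 * (2 * s) - 2 * s) = 2⁻¹ := by field_simp; ring
            rw [this, ENNReal.ofReal_inv_of_pos (by norm_num)]
            rw [ENNReal.ofReal_ofNat, mul_comm (2 : ℝ≥0∞), mul_assoc,
              ENNReal.inv_mul_cancel (by simp) (by simp), mul_one]
        _ = 2 * ∫⁻ t in Ioc (2 * s) (2 * (2 * s)), Q (2 * s) * V (2 * (2 * s)) ^ (-(1 / q)) *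
              ENNReal.ofReal (2 * (2 * s))⁻¹ := by rw [setLIntegral_const]
        _ ≤ 2 * ∫⁻ t in Ioc (2 * s) (2 * (2 * s)), Q t * V t ^ (-(1 / q)) *
              ENNReal.ofReal t⁻¹ := by
            refine mul_le_mul' le_rfl (setLIntegral_mono' measurableSet_Ioc fun t ht => ?_)
            have ht0 : 0 < t := by linarith [ht.1]
            refine mul_le_mul' (mul_le_mul' (hQmono _ _ ht.1.le) ?_) ?_
            · rw [ENNReal.rpow_neg, ENNReal.rpow_neg]
              exact ENNReal.inv_le_inv.2 (ENNReal.rpow_le_rpow (hVmono _ _ ht.2) hiq.le)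
            · exact ENNReal.ofReal_le_ofReal (inv_anti₀ ht0 ht.2)
        _ ≤ 2 * J := by
            refine mul_le_mul' le_rfl (lintegral_mono_set fun t ht => ?_)
            exact lt_of_le_of_lt (by linarith) ht.1
    calc _ ≤ Q (2 * s) * (k * V (2 * (2 * s)) ^ (-(1 / q))) := by
          gcongr; exact hdoub _ (by positivity)
      _ = k * (Q (2 * s) * V (2 * (2 * s)) ^ (-(1 / q))) := by ring
      _ ≤ k * (2 * J) := by gcongr
      _ = _ := by ring
  set T := C * (2 ^ n) ^ d * (2 * k) * J with hT
  let F1 : EuclideanSpace ℝ (Fin n) → ℝ≥0∞ := (ball a (2 * r)).indicator F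
  have hF1 : Measurable F1 := hF.indicator measurableSet_ball
  let M1 : EuclideanSpace ℝ (Fin n) → ℝ≥0∞ := fun x => ⨆ s : Ioi (0 : ℝ),
    volume (ball x s.1) ^ (-d) * ∫⁻ y in ball x s.1, F1 y
  have pt : ∀ x ∈ ball a r, (⨆ s : Ioi (0 : ℝ), volume (ball x s.1) ^ (-d) *
        ∫⁻ y in ball x s.1, F y) ≤ max (M1 x) T := by
    intro x hx
    refine iSup_le fun s => ?_
    obtain ⟨s, hs⟩ := s
    have hs : 0 < s := hs
    simp only
    rcases lt_or_ge s r with hsr | hsr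
    · refine le_max_of_le_left (le_trans (le_of_eq ?_)
        (le_iSup (fun s : Ioi (0 : ℝ) => volume (ball x s.1) ^ (-d) *
          ∫⁻ y in ball x s.1, F1 y) ⟨s, hs⟩))
      simp only
      congr 1
      refine setLIntegral_congr_fun measurableSet_ball fun y hy => ?_
      have : y ∈ ball a (2 * r) := by
        simp only [mem_ball] at *
        linarith [dist_triangle y x a]
      simp [F1, indicator_of_mem this]
    · refine le_max_of_le_right ?_
      have hsub : ball x s ⊆ ball a (2 * s) := by
        intro y hy
        simp only [mem_ball] at *
        linarith [dist_triangle y x a]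
      have hvol : volume (ball a (2 * s)) = 2 ^ n * volume (ball x s) := by
        rw [vol_double, Measure.addHaar_ball_center volume a, Measure.addHaar_ball_center volume x]
      have hv0 : volume (ball x s) ≠ 0 := (measure_ball_pos volume x hs).ne'
      have hvt : volume (ball x s) ≠ ⊤ := measure_ball_lt_top.ne
      have hσ : (∫⁻ y in ball a (2 * s), ω y ^ (-p')) ^ (1 / p') ≤
          V (2 * s) ^ (-(1 / q)) * (C * (2 ^ n) ^ d * volume (ball x s) ^ d) := by
        have h1 := hA a (2 * s) (by positivity)
        rw [hvol, ENNReal.mul_rpow_of_nonneg _ _ hd0.le, ← mul_assoc] at h1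
        calc _ = V (2 * s) ^ (-(1 / q)) * (V (2 * s) ^ (1 / q) *
              (∫⁻ y in ball a (2 * s), ω y ^ (-p')) ^ (1 / p')) := by
              rw [← mul_assoc, ENNReal.rpow_neg, ENNReal.inv_mul_cancel (hP0 _ (by positivity))
                (hPt _), one_mul]
          _ ≤ _ := by gcongr
      calc volume (ball x s) ^ (-d) * ∫⁻ y in ball x s, F y
          ≤ volume (ball x s) ^ (-d) * ∫⁻ y in ball a (2 * s), F y := by
            gcongr
        _ ≤ volume (ball x s) ^ (-d) * (Q (2 * s) *
              (∫⁻ y in ball a (2 * s), ω y ^ (-p')) ^ (1 / p')) := by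
            gcongr
            exact holder_set _ ω F hω hF (ae_restrict_of_ae h0) p p' hp hp'
        _ ≤ volume (ball x s) ^ (-d) * (Q (2 * s) *
              (V (2 * s) ^ (-(1 / q)) * (C * (2 ^ n) ^ d * volume (ball x s) ^ d))) := by
            gcongr
        _ = (volume (ball x s) ^ (-d) * volume (ball x s) ^ d) * (C * (2 ^ n) ^ d *
              (Q (2 * s) * V (2 * s) ^ (-(1 / q)))) := by ring
        _ = C * (2 ^ n) ^ d * (Q (2 * s) * V (2 * s) ^ (-(1 / q))) := by
            rw [← ENNReal.rpow_add _ _ hv0 hvt, neg_add_cancel, ENNReal.rpow_zero, one_mul]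
        _ ≤ C * (2 ^ n) ^ d * (2 * k * J) := mul_le_mul' le_rfl (key s hsr)
        _ = T := by rw [hT]; ring
  set I2 := ∫⁻ x in ball a (2 * r), F x ^ p * ω x ^ p with hI2
  have hIF1 : ∫⁻ x, F1 x ^ p * ω x ^ p = I2 := by
    rw [hI2, ← lintegral_indicator measurableSet_ball]
    refine lintegral_congr fun x => ?_
    by_cases hx : x ∈ ball a (2 * r)
    · simp only [F1, indicator_of_mem hx]
    · simp only [F1, indicator_of_notMem hx, ENNReal.zero_rpow_of_pos hp0, zero_mul]
  have hmain : ∫⁻ x in ball a r, (⨆ s : Ioi (0 : ℝ), volume (ball x s.1) ^ (-d) *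
        ∫⁻ y in ball x s.1, F y) ^ q * ω x ^ q ≤ D1 * I2 ^ (q / p) + T ^ q * V r := by
    calc _ ≤ ∫⁻ x in ball a r, (M1 x ^ q * ω x ^ q + T ^ q * ω x ^ q) := by
          refine setLIntegral_mono' measurableSet_ball fun x hx => ?_
          rw [← add_mul]
          gcongr
          refine (ENNReal.rpow_le_rpow (pt x hx) hq0.le).trans ?_
          rw [ENNReal.max_rpow hq0.le]
          exact max_le le_self_add le_add_self
      _ = (∫⁻ x in ball a r, M1 x ^ q * ω x ^ q) + ∫⁻ x in ball a r, T ^ q * ω x ^ q :=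
          lintegral_add_right _ (by fun_prop)
      _ ≤ (∫⁻ x, M1 x ^ q * ω x ^ q) + T ^ q * V r := by
          rw [lintegral_const_mul _ (by fun_prop)]
          gcongr
          exact Measure.restrict_le_self
      _ ≤ _ := by
          have h1 : ∫⁻ x, F1 x ^ p * ω x ^ p ≠ ⊤ := by
            rw [hIF1]; exact hFt a (2 * r) (by positivity)
          have := hMW F1 hF1 h1
          rw [hIF1] at this
          gcongr
  have hroot : (∫⁻ x in ball a r, (⨆ s : Ioi (0 : ℝ), volume (ball x s.1) ^ (-d) *
        ∫⁻ y in ball x s.1, F y) ^ q * ω x ^ q) ^ (1 / q) ≤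
        D1 ^ (1 / q) * Q (2 * r) + T * V r ^ (1 / q) := by
    refine (ENNReal.rpow_le_rpow hmain hiq.le).trans ((ENNReal.rpow_add_le_add_rpow _ _ hiq.le
      (by rw [div_le_one hq0]; linarith)).trans (le_of_eq ?_))
    rw [ENNReal.mul_rpow_of_nonneg _ _ hiq.le, ENNReal.mul_rpow_of_nonneg _ _ hiq.le,
      ← ENNReal.rpow_mul, ← ENNReal.rpow_mul]
    have e1 : q / p * (1 / q) = 1 / p := by field_simp
    have e2 : q * (1 / q) = 1 := by field_simp
    rw [e1, e2, ENNReal.rpow_one]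
  calc _ ≤ V r ^ (-(1 / q)) * (D1 ^ (1 / q) * Q (2 * r) + T * V r ^ (1 / q)) := by
        gcongr
    _ = D1 ^ (1 / q) * (Q (2 * r) * V r ^ (-(1 / q))) + T * (V r ^ (-(1 / q)) * V r ^ (1 / q)) := by
        ring
    _ = D1 ^ (1 / q) * (Q (2 * r) * V r ^ (-(1 / q))) + T := by
        rw [ENNReal.rpow_neg, ENNReal.inv_mul_cancel (hP0 r hr) (hPt r), mul_one]
    _ ≤ D1 ^ (1 / q) * (Q (2 * r) * (k * V (2 * r) ^ (-(1 / q)))) + T := by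
        gcongr; exact hdoub r hr
    _ = D1 ^ (1 / q) * (k * (Q (2 * r) * V (2 * r) ^ (-(1 / q)))) + T := by ring
    _ ≤ D1 ^ (1 / q) * (k * (2 * k * J)) + T :=
        add_le_add (mul_le_mul' le_rfl (mul_le_mul' le_rfl (key r le_rfl))) le_rfl
    _ = _ := by rw [hT]; ring

/-- Let `0 < α < n`, `1 < p < n/α`, `1/q = 1/p − α/n`, `w ∈ A_{p,q}`, and
let `ψ₁, ψ₂` be positive functions on `ℝⁿ × (0,∞)` with
`∫_r^∞ (w^p(B(a,t))^{1/p}/w^q(B(a,t))^{1/q})·ψ₁(a,t) dt/t ≤ C·ψ₂(a,r)` for all `(a,r)`.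
Then the fractional maximal operator `M_α` is bounded from `M^{p,w^p}_{ψ₁}` to
`M^{q,w^q}_{ψ₂}`. -/
theorem statement16 {n : ℕ} (α p q p' : ℝ) (hα : 0 < α) (hαn : α < n)
    (hp : 1 < p) (hpn : p < (n : ℝ) / α) (hq : 1 / q = 1 / p - α / n)
    (hp' : 1 / p + 1 / p' = 1)
    (w : EuclideanSpace ℝ (Fin n) → ℝ) (hw : IsWeight w) (hApq : MuckApq p q p' w)
    (ψ₁ ψ₂ : EuclideanSpace ℝ (Fin n) → ℝ → ℝ)
    (hψ₁ : ∀ a r, 0 < r → 0 < ψ₁ a r) (hψ₂ : ∀ a r, 0 < r → 0 < ψ₂ a r)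
    (C : ℝ) (hC : 0 < C)
    (hcond : ∀ (a : EuclideanSpace ℝ (Fin n)) (r : ℝ), 0 < r →
      (∫⁻ t in Set.Ioi r,
        wSet (fun x => w x ^ p) (ball a t) ^ (1 / p) *
          wSet (fun x => w x ^ q) (ball a t) ^ (-(1 / q)) *
          ENNReal.ofReal (ψ₁ a t) * ENNReal.ofReal t⁻¹) ≤
        ENNReal.ofReal (C * ψ₂ a r)) :
    ∃ C' : ℝ, 0 < C' ∧ ∀ f : EuclideanSpace ℝ (Fin n) → ℝ,
      MemLocWLp p (fun x => w x ^ p) f → morreyNorm p (fun x => w x ^ p) ψ₁ f < ⊤ →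
      morreyNormE q (fun x => w x ^ q) ψ₂ (fracMax α f) ≤
        ENNReal.ofReal C' * morreyNorm p (fun x => w x ^ p) ψ₁ f := by
  have hn0 : (0 : ℝ) < n := hα.trans hαn
  have hp0 : 0 < p := by linarith
  have hiq : 0 < 1 / q := by
    rw [hq, sub_pos, div_lt_div_iff₀ hn0 hp0]
    have := (lt_div_iff₀ hα).1 hpn
    linarith
  have hq0 : 0 < q := one_div_pos.1 hiq
  have hpq : p < q := by
    have h1 : 1 / q < 1 / p := by
      have : 0 < α / n := by positivity
      linarith
    exact (one_div_lt_one_div hq0 hp0).1 h1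
  have hip' : 0 < 1 / p' := by
    have : 1 / p < 1 := by rw [div_lt_one hp0]; exact hp
    linarith
  have hp'0 : 0 < p' := one_div_pos.1 hip'
  have hexp : α / n - 1 = -(1 / q + 1 / p') := by linarith
  obtain ⟨hwm, -, -, hwpos⟩ := hw
  obtain ⟨C0, hC0, hA0⟩ := hApq
  set ω : EuclideanSpace ℝ (Fin n) → ℝ≥0∞ := fun x => ENNReal.ofReal (w x) with hωdef
  have hω : Measurable ω := hwm.ennreal_ofReal
  have h0 : ∀ᵐ x, ω x ≠ 0 ∧ ω x ≠ ⊤ := by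
    filter_upwards [hwpos] with x hx
    exact ⟨(ENNReal.ofReal_pos.2 hx).ne', ENNReal.ofReal_ne_top⟩
  have hrp : ∀ s : ℝ, ∀ᵐ x, ENNReal.ofReal (w x ^ s) = ω x ^ s := by
    intro s
    filter_upwards [hwpos] with x hx
    exact (ENNReal.ofReal_rpow_of_pos hx).symm
  have hset : ∀ (s : ℝ) (E : Set (EuclideanSpace ℝ (Fin n))),
      ∫⁻ x in E, ENNReal.ofReal (w x ^ s) = ∫⁻ x in E, ω x ^ s := fun s E =>
    lintegral_congr_ae (ae_restrict_of_ae (hrp s))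
  have hsetG : ∀ (s : ℝ) (E : Set (EuclideanSpace ℝ (Fin n)))
      (G : EuclideanSpace ℝ (Fin n) → ℝ≥0∞),
      ∫⁻ x in E, G x ^ s * ENNReal.ofReal (w x ^ s) = ∫⁻ x in E, G x ^ s * ω x ^ s := by
    intro s E G
    refine lintegral_congr_ae (ae_restrict_of_ae ?_)
    filter_upwards [hrp s] with x hx
    rw [hx]
  have hA : ∀ a r, 0 < r → (∫⁻ x in ball a r, ω x ^ q) ^ (1 / q) *
      (∫⁻ x in ball a r, ω x ^ (-p')) ^ (1 / p') ≤
        ENNReal.ofReal C0 * volume (ball a r) ^ (1 / q + 1 / p') := by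
    intro a r hr
    have h := hA0 a r hr
    rw [hset, hset] at h
    have hv0 : volume (ball a r) ≠ 0 := (measure_ball_pos volume a hr).ne'
    have hvt : volume (ball a r) ≠ ⊤ := measure_ball_lt_top.ne
    set v := volume (ball a r)
    set U := ∫⁻ x in ball a r, ω x ^ q
    set S := ∫⁻ x in ball a r, ω x ^ (-p')
    rw [ENNReal.mul_rpow_of_nonneg _ _ hiq.le, ENNReal.mul_rpow_of_nonneg _ _ hip'.le,
      ENNReal.inv_rpow, ENNReal.inv_rpow, ← ENNReal.rpow_neg, ← ENNReal.rpow_neg] at h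
    calc U ^ (1 / q) * S ^ (1 / p')
        = (v ^ (-(1 / q)) * U ^ (1 / q) * (v ^ (-(1 / p')) * S ^ (1 / p'))) *
            v ^ (1 / q + 1 / p') := by
          have : v ^ (-(1 / q)) * v ^ (-(1 / p')) * v ^ (1 / q + 1 / p') = 1 := by
            rw [← ENNReal.rpow_add _ _ hv0 hvt, ← ENNReal.rpow_add _ _ hv0 hvt]
            ring_nf
            exact ENNReal.rpow_zero
          calc U ^ (1 / q) * S ^ (1 / p')
              = (v ^ (-(1 / q)) * v ^ (-(1 / p')) * v ^ (1 / q + 1 / p')) *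
                (U ^ (1 / q) * S ^ (1 / p')) := by rw [this, one_mul]
            _ = _ := by ring
      _ ≤ _ := by gcongr
  obtain ⟨hUt, -, -, -⟩ := Apq_facts ω hω h0 q p' hq0 hp'0 _ ENNReal.ofReal_ne_top hA
  obtain ⟨D, hD, hmain⟩ := local_est ω hω h0 p q p' hp hpq hp'0 hp' _ ENNReal.ofReal_ne_top hA
  have hW0 := dens_ball_pos ω hω h0 p
  have hWt : ∀ a r, ∫⁻ x in ball a r, ω x ^ p ≠ ⊤ := by
    intro a r
    refine ne_top_of_le_ne_top (b := ∫⁻ x in ball a r, (1 + ω x ^ q)) ?_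
      (lintegral_mono fun x => ?_)
    · rw [lintegral_add_left measurable_const]
      refine ENNReal.add_ne_top.2 ⟨?_, hUt a r⟩
      rw [setLIntegral_const, one_mul]
      exact measure_ball_lt_top.ne
    · rcases le_total (ω x) 1 with h | h
      · exact le_add_right (ENNReal.rpow_le_one h hp0.le)
      · exact le_add_left (ENNReal.rpow_le_rpow_of_exponent_le h hpq.le)
  refine ⟨(D * ENNReal.ofReal C).toReal + 1, by positivity, ?_⟩
  intro f hf hN
  set N := morreyNorm p (fun x => w x ^ p) ψ₁ f with hNdef
  have hDC : D * ENNReal.ofReal C ≤ ENNReal.ofReal ((D * ENNReal.ofReal C).toReal + 1) := by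
    calc D * ENNReal.ofReal C = ENNReal.ofReal (D * ENNReal.ofReal C).toReal :=
          (ENNReal.ofReal_toReal (ENNReal.mul_ne_top hD ENNReal.ofReal_ne_top)).symm
      _ ≤ _ := ENNReal.ofReal_le_ofReal (by linarith)
  refine le_trans ?_ (mul_le_mul' hDC le_rfl)
  let F : EuclideanSpace ℝ (Fin n) → ℝ≥0∞ := fun x => ENNReal.ofReal |f x|
  have hF : Measurable F := (measurable_norm.comp hf.1).ennreal_ofReal
  have hip : 0 < 1 / p := by positivity
  have hFt : ∀ a r, 0 < r → ∫⁻ x in ball a r, F x ^ p * ω x ^ p ≠ ⊤ := by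
    intro a r hr h
    have h1 := hf.2 a r hr
    unfold wLp at h1
    rw [hsetG p _ F, h, ENNReal.top_rpow_of_pos hip] at h1
    exact lt_irrefl _ h1
  have hQ : ∀ a t, 0 < t → (∫⁻ x in ball a t, F x ^ p * ω x ^ p) ^ (1 / p) ≤
      N * (ENNReal.ofReal (ψ₁ a t) * (∫⁻ x in ball a t, ω x ^ p) ^ (1 / p)) := by
    intro a t ht
    have h1 : (ENNReal.ofReal (ψ₁ a t))⁻¹ * (∫⁻ x in ball a t, ω x ^ p) ^ (-(1 / p)) *
        (∫⁻ x in ball a t, F x ^ p * ω x ^ p) ^ (1 / p) ≤ N := by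
      have := le_iSup₂ (f := fun (a : EuclideanSpace ℝ (Fin n)) (r : Set.Ioi (0 : ℝ)) =>
        (ENNReal.ofReal (ψ₁ a r.1))⁻¹ * wSet (fun x => w x ^ p) (ball a r.1) ^ (-(1 / p)) *
          wLp p (fun x => w x ^ p) f (ball a r.1)) a ⟨t, ht⟩
      simp only [wSet, wLp] at this
      rw [hset, hsetG p _ F] at this
      exact this
    have hψ0 : ENNReal.ofReal (ψ₁ a t) ≠ 0 := (ENNReal.ofReal_pos.2 (hψ₁ a t ht)).ne'
    have hw0 : (∫⁻ x in ball a t, ω x ^ p) ^ (1 / p) ≠ 0 :=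
      (ENNReal.rpow_pos (pos_iff_ne_zero.2 (hW0 a t ht)) (hWt a t)).ne'
    have hwt : (∫⁻ x in ball a t, ω x ^ p) ^ (1 / p) ≠ ⊤ :=
      ENNReal.rpow_ne_top_of_nonneg hip.le (hWt a t)
    rw [ENNReal.rpow_neg] at h1
    set X := (∫⁻ x in ball a t, F x ^ p * ω x ^ p) ^ (1 / p)
    set Y := (∫⁻ x in ball a t, ω x ^ p) ^ (1 / p)
    set Z := ENNReal.ofReal (ψ₁ a t)
    calc X = (Z⁻¹ * Z) * (Y⁻¹ * Y) * X := by
          rw [ENNReal.inv_mul_cancel hψ0 ENNReal.ofReal_ne_top, ENNReal.inv_mul_cancel hw0 hwt,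
            one_mul, one_mul]
      _ = (Z⁻¹ * Y⁻¹ * X) * (Z * Y) := by ring
      _ ≤ _ := by gcongr
  unfold morreyNormE
  refine iSup₂_le fun a r => ?_
  obtain ⟨r, hr⟩ := r
  have hr : 0 < r := hr
  have hM := hmain F hF hFt a r hr
  have hfm : ∀ x, fracMax α f x = ⨆ s : Ioi (0 : ℝ), volume (ball x s.1) ^ (-(1 / q + 1 / p')) *
        ∫⁻ y in ball x s.1, F y := by
    intro x
    unfold fracMax
    rw [hexp]
  simp only [← hfm] at hM
  simp only [wSet, wLpE]
  rw [hset, hsetG q _ (fracMax α f)]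
  have hJ : (∫⁻ t in Ioi r, (∫⁻ x in ball a t, F x ^ p * ω x ^ p) ^ (1 / p) *
        (∫⁻ x in ball a t, ω x ^ q) ^ (-(1 / q)) * ENNReal.ofReal t⁻¹) ≤
        N * ENNReal.ofReal (C * ψ₂ a r) := by
    have hc := hcond a r hr
    simp only [wSet, hset] at hc
    calc _ ≤ ∫⁻ t in Ioi r, N * ((∫⁻ x in ball a t, ω x ^ p) ^ (1 / p) *
          (∫⁻ x in ball a t, ω x ^ q) ^ (-(1 / q)) *
          ENNReal.ofReal (ψ₁ a t) * ENNReal.ofReal t⁻¹) := by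
          refine setLIntegral_mono' measurableSet_Ioi fun t ht => ?_
          have h1 := hQ a t (hr.trans ht)
          refine (mul_le_mul' (mul_le_mul' h1 le_rfl) le_rfl).trans (le_of_eq ?_)
          ring
      _ = N * _ := lintegral_const_mul' _ _ hN.ne
      _ ≤ _ := mul_le_mul' le_rfl hc
  have hψ0 : ENNReal.ofReal (ψ₂ a r) ≠ 0 := (ENNReal.ofReal_pos.2 (hψ₂ a r hr)).ne'
  rw [mul_assoc]
  calc _ ≤ (ENNReal.ofReal (ψ₂ a r))⁻¹ * (D * (N * ENNReal.ofReal (C * ψ₂ a r))) :=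
        mul_le_mul' le_rfl (hM.trans (mul_le_mul' le_rfl hJ))
    _ = ((ENNReal.ofReal (ψ₂ a r))⁻¹ * ENNReal.ofReal (ψ₂ a r)) * (D * ENNReal.ofReal C * N) := by
        rw [ENNReal.ofReal_mul hC.le]; ring
    _ = _ := by rw [ENNReal.inv_mul_cancel hψ0 ENNReal.ofReal_ne_top, one_mul]
end
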